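/- Let k ≥ 2 and let G be any finite simple graph. The non-matching complex NM_k(G) = {G' ⊆ E(G) : ν(G') < k} has vanishing reduced homology (over any field) in all dimensions d ≥ 3k - 3. -/

import Mathlib

attribute [local instance] Classical.propDecidable

variable {W : Type} [LinearOrder W] (F : Type) [Field F]

/-- The simplicial boundary operator on formal `F`-linear combinations of finite sets
(faces `s` of cardinality `n` being generators in degree `n`; the empty face is the
generator of the augmentation degree, so this computes *reduced* homology). -/
noncomputable def bdry (x : Finset W →₀ F) : Finset W →₀ F :=
  x.sum fun s a =>
    ∑ v ∈ s, (a * (-1 : F) ^ (s.filter fun w => w < v).card) • Finsupp.single (s.erase v) (1 : F)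

/-- The reduced homology (with coefficients in `F`) of the complex `K` vanishes in
dimension `d`: every reduced `d`-cycle of `K` is a boundary of a `(d+1)`-chain of `K`.
(A face of dimension `d` has cardinality `d + 1`.) -/
def VanishesAt (K : Finset (Finset W)) (d : ℕ) : Prop :=
  ∀ x : Finset W →₀ F, (∀ s ∈ x.support, s ∈ K ∧ s.card = d + 1) → bdry F x = 0 →
    ∃ y : Finset W →₀ F, (∀ s ∈ y.support, s ∈ K ∧ s.card = d + 2) ∧ bdry F y = x

/-- The link of a face `σ` in the complex `K`. -/
noncomputable def linkOf (K : Finset (Finset W)) (σ : Finset W) : Finset (Finset W) :=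
  K.filter fun τ => Disjoint τ σ ∧ τ ∪ σ ∈ K

/-- A matching: a finite set of non-loop edges that are pairwise vertex-disjoint. -/
def IsMatching {V : Type} (M : Finset (Sym2 V)) : Prop :=
  (∀ e ∈ M, ¬ e.IsDiag) ∧ ∀ e ∈ M, ∀ f ∈ M, e ≠ f → ∀ v, v ∈ e → v ∉ f

/-- The matching number of a finite edge set. -/
noncomputable def nu {V : Type} (E : Finset (Sym2 V)) : ℕ :=
  (E.powerset.filter fun M => IsMatching M).sup Finset.card

/-- The non-matching complex `NM_k(G)` of the graph with edge set `E`: the family of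
edge subsets whose matching number is `< k`. -/
noncomputable def NM {V : Type} (k : ℕ) (E : Finset (Sym2 V)) : Finset (Finset (Sym2 V)) :=
  E.powerset.filter fun σ => nu σ < k



/-! ### Relative chain complexes of convex families -/
set_option linter.unusedSectionVars false
set_option linter.unusedVariables false
section alg

/-- sign of removing `v` from `s` -/
noncomputable def sg (s : Finset W) (v : W) : F := (-1 : F) ^ (s.filter fun w => w < v).card

/-- boundary of a generator -/
noncomputable def bd1 (s : Finset W) : Finset W →₀ F :=
  ∑ v ∈ s, sg F s v • Finsupp.single (s.erase v) (1 : F)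

/-- linear boundary -/
noncomputable def bd : (Finset W →₀ F) →ₗ[F] (Finset W →₀ F) :=
  Finsupp.linearCombination F (bd1 F)

theorem bdry_eq (x : Finset W →₀ F) : bdry F x = bd F x := by
  unfold bdry bd
  rw [Finsupp.linearCombination_apply]
  refine Finsupp.sum_congr fun s _ => ?_
  simp only [bd1, sg, Finset.smul_sum, smul_smul]

theorem bd_single (s : Finset W) (a : F) : bd F (Finsupp.single s a) = a • bd1 F s := by
  simp [bd]

theorem sg_sq (s : Finset W) (v : W) : sg F s v * sg F s v = 1 := by
  unfold sg; rw [← pow_add, ← two_mul, pow_mul]; simp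

theorem sg_erase_lt (s : Finset W) {v w : W} (hv : v ∈ s) (h : v < w) :
    sg F (s.erase v) w = - sg F s w := by
  unfold sg
  have h1 : ((s.erase v).filter fun x => x < w) = (s.filter fun x => x < w).erase v := by
    ext x; simp; tauto
  rw [h1]
  have h2 : v ∈ s.filter fun x => x < w := by simp [hv, h]
  rw [← Finset.card_erase_add_one h2, pow_succ]; ring

theorem sg_erase_ge (s : Finset W) {v w : W} (h : w ≤ v) :
    sg F (s.erase v) w = sg F s w := by
  unfold sg
  congr 2
  ext x; simp only [Finset.mem_filter, Finset.mem_erase]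
  constructor
  · tauto
  · rintro ⟨a, b⟩; exact ⟨⟨(lt_of_lt_of_le b h).ne, a⟩, b⟩

theorem sg_swap (s : Finset W) {v w : W} (hv : v ∈ s) (hw : w ∈ s) (h : v ≠ w) :
    sg F s v * sg F (s.erase v) w = - (sg F s w * sg F (s.erase w) v) := by
  rcases lt_or_gt_of_ne h with h | h
  · rw [sg_erase_lt F s hv h, sg_erase_ge F s h.le]; ring
  · rw [sg_erase_lt F s hw h, sg_erase_ge F s h.le]; ring

theorem bd_bd1 (s : Finset W) : bd F (bd1 F s) = 0 := by
  have h1 : bd F (bd1 F s) = ∑ v ∈ s, ∑ w ∈ s.erase v,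
      (sg F s v * sg F (s.erase v) w) • Finsupp.single ((s.erase v).erase w) (1 : F) := by
    conv_lhs => rw [bd1]
    rw [map_sum]
    refine Finset.sum_congr rfl fun v _ => ?_
    rw [map_smul, bd_single, one_smul, bd1, Finset.smul_sum]
    simp only [smul_smul]
  rw [h1, Finset.sum_sigma']
  refine Finset.sum_involution (fun p _ => ⟨p.2, p.1⟩) ?_ ?_ ?_ ?_
  · rintro ⟨v, w⟩ hp
    simp only [Finset.mem_sigma, Finset.mem_erase] at hp
    rw [sg_swap F s hp.1 hp.2.2 (Ne.symm hp.2.1), Finset.erase_right_comm, ← add_smul]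
    simp
  · rintro ⟨v, w⟩ hp _ heq
    simp only [Finset.mem_sigma, Finset.mem_erase] at hp
    simp only [Sigma.mk.injEq] at heq
    exact hp.2.1 heq.1
  · rintro ⟨v, w⟩ hp
    simp only [Finset.mem_sigma, Finset.mem_erase] at hp ⊢
    exact ⟨hp.2.2, Ne.symm hp.2.1, hp.1⟩
  · rintro ⟨v, w⟩ hp
    rfl

theorem bd_bd (x : Finset W →₀ F) : bd F (bd F x) = 0 := by
  induction x using Finsupp.induction_linear with
  | zero => simp
  | add x y hx hy => simp [hx, hy]
  | single s a => rw [bd_single, map_smul, bd_bd1, smul_zero]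

variable {F}

theorem bd_supp (x : Finset W →₀ F) (t : Finset W) (h : bd F x t ≠ 0) :
    ∃ s ∈ x.support, ∃ v ∈ s, t = s.erase v := by
  by_contra hc
  push Not at hc
  apply h
  unfold bd
  rw [Finsupp.linearCombination_apply, Finsupp.sum, Finsupp.finsetSum_apply]
  refine Finset.sum_eq_zero fun s hs => ?_
  rw [Finsupp.smul_apply, bd1, Finsupp.finsetSum_apply]
  rw [Finset.sum_eq_zero, smul_zero]
  intro v hv
  rw [Finsupp.smul_apply, Finsupp.single_eq_of_ne (hc s hs v hv), smul_zero]

/-- chains supported on faces in `P` of size `n` -/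
def Ch (P : Finset W → Prop) (n : ℕ) (x : Finset W →₀ F) : Prop :=
  ∀ s, x s ≠ 0 → P s ∧ s.card = n

theorem Ch.add {P : Finset W → Prop} {n : ℕ} {x y : Finset W →₀ F} (hx : Ch P n x)
    (hy : Ch P n y) : Ch P n (x + y) := by
  intro s hs
  by_cases h : x s = 0
  · apply hy; simpa [h] using hs
  · exact hx s h

theorem Ch.sub {P : Finset W → Prop} {n : ℕ} {x y : Finset W →₀ F} (hx : Ch P n x)
    (hy : Ch P n y) : Ch P n (x - y) := by
  intro s hs
  by_cases h : x s = 0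
  · apply hy; simpa [h] using hs
  · exact hx s h

theorem Ch.mono {P P' : Finset W → Prop} {n : ℕ} {x : Finset W →₀ F} (hx : Ch P n x)
    (h : ∀ s, P s → P' s) : Ch P' n x := fun s hs => ⟨h s (hx s hs).1, (hx s hs).2⟩

theorem Ch.filter {P : Finset W → Prop} {n : ℕ} {x : Finset W →₀ F} (hx : Ch P n x)
    (u : Finset W → Prop) [DecidablePred u] : Ch (fun s => P s ∧ u s) n (x.filter u) := by
  intro s hs
  have hu : u s := by
    by_contra h; exact hs (Finsupp.filter_apply_neg u x h)
  rw [Finsupp.filter_apply_pos u x hu] at hs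
  exact ⟨⟨(hx s hs).1, hu⟩, (hx s hs).2⟩

theorem bd_zero_of {P : Finset W → Prop} {n : ℕ} {x : Finset W →₀ F} (hx : Ch P n x)
    (t : Finset W) (h : ∀ s, P s → t ⊆ s → False) : bd F x t = 0 := by
  by_contra hc
  obtain ⟨s, hs, v, hv, rfl⟩ := bd_supp x t hc
  exact h s (hx s (by simpa using hs)).1 (Finset.erase_subset _ _)

theorem Ch.bd {P : Finset W → Prop} {n : ℕ} {x : Finset W →₀ F} (hx : Ch P (n + 1) x) :
    Ch (fun _ => True) n (bd F x) := by
  intro t ht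
  obtain ⟨s, hs, v, hv, rfl⟩ := bd_supp x t ht
  refine ⟨trivial, ?_⟩
  have := (hx s (by simpa using hs)).2
  rw [Finset.card_erase_of_mem hv]; omega

/-- convexity of a family -/
def Conv (P : Finset W → Prop) : Prop := ∀ s t r, s ⊆ t → t ⊆ r → P s → P r → P t

theorem bd_filter_bd {P : Finset W → Prop} (hP : Conv P) {n : ℕ} {x : Finset W →₀ F}
    (hx : Ch P n x) (t : Finset W) (ht : P t) : bd F ((bd F x).filter P) t = 0 := by
  have h1 : (bd F x).filter P + (bd F x).filter (fun s => ¬ P s) = bd F x :=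
    Finsupp.filter_add_filter_not _ _
  have h2 : bd F ((bd F x).filter P) t + bd F ((bd F x).filter (fun s => ¬ P s)) t = 0 := by
    rw [← Finsupp.add_apply, ← map_add, h1, bd_bd]; rfl
  have h3 : bd F ((bd F x).filter (fun s => ¬ P s)) t = 0 := by
    by_contra hc
    obtain ⟨s, hs, v, hv, rfl⟩ := bd_supp _ _ hc
    rw [Finsupp.support_filter, Finset.mem_filter] at hs
    obtain ⟨r, hr, w, hw, rfl⟩ := bd_supp x s (by simpa using hs.1)
    exact hs.2 (hP _ _ _ (Finset.erase_subset _ _) (Finset.erase_subset _ _) ht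
      (hx r (by simpa using hr)).1)
  rw [h3, add_zero] at h2; exact h2

variable (F)

/-- vanishing of the relative homology of a family in size `n` -/
def Van (P : Finset W → Prop) (n : ℕ) : Prop :=
  ∀ x : Finset W →₀ F, Ch P n x → (∀ s, P s → bd F x s = 0) →
    ∃ y : Finset W →₀ F, Ch P (n + 1) y ∧ ∀ s, P s → bd F y s = x s

variable {F}

theorem Van.congr {P P' : Finset W → Prop} {n : ℕ} (h : Van F P n) (hp : ∀ s, P s ↔ P' s) :
    Van F P' n := by
  have : P = P' := funext fun s => propext (hp s)
  rwa [← this]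

theorem bd_split (x : Finset W →₀ F) (u : Finset W → Prop) (s : Finset W) :
    bd F x s = bd F (x.filter u) s + bd F (x.filter (fun s => ¬ u s)) s := by
  have hsplit : x.filter u + x.filter (fun s => ¬ u s) = x := Finsupp.filter_add_filter_not _ _
  have h := congrArg (fun z => bd F z s) hsplit
  simp only [map_add, Finsupp.add_apply] at h
  exact h.symm

theorem Van.glue {P : Finset W → Prop} (hP : Conv P) (u : Finset W → Prop)
    (hu : ∀ s t, s ⊆ t → P s → P t → u s → u t) {n : ℕ}
    (h1 : Van F (fun s => P s ∧ u s) n) (h2 : Van F (fun s => P s ∧ ¬ u s) n) : Van F P n := by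
  intro x hx hbx
  obtain ⟨y1, hy1, hb1⟩ := h1 (x.filter u) (hx.filter u) (by
    rintro s ⟨hs, hus⟩
    have h3 : bd F (x.filter (fun s => ¬ u s)) s = 0 :=
      bd_zero_of (hx.filter (fun s => ¬ u s)) s fun r hr hsr => hr.2 (hu s r hsr hs hr.1 hus)
    have h4 := hbx s hs
    rw [bd_split x u, h3, add_zero] at h4
    exact h4)
  have hy1P : Ch P (n + 1) y1 := hy1.mono fun s h => h.1
  obtain ⟨y2, hy2, hb2⟩ := h2 (x - (bd F y1).filter P) (by
    intro s hs
    have h5 : Ch P n (x - (bd F y1).filter P) :=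
      hx.sub ((hy1.bd.filter P).mono fun s h => h.2)
    refine ⟨⟨(h5 s hs).1, fun hus => hs ?_⟩, (h5 s hs).2⟩
    have hPs := (h5 s hs).1
    rw [Finsupp.sub_apply, Finsupp.filter_apply_pos _ _ hPs, hb1 s ⟨hPs, hus⟩,
      Finsupp.filter_apply_pos _ _ hus, sub_self]) (by
    rintro s ⟨hs, _⟩
    rw [map_sub, Finsupp.sub_apply, hbx s hs, bd_filter_bd hP hy1P s hs, sub_zero])
  refine ⟨y1 + y2, hy1P.add (hy2.mono fun s h => h.1), fun s hs => ?_⟩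
  rw [map_add, Finsupp.add_apply]
  by_cases hus : u s
  · rw [hb1 s ⟨hs, hus⟩, Finsupp.filter_apply_pos _ _ hus,
      bd_zero_of hy2 s fun r hr hsr => hr.2 (hu s r hsr hs hr.1 hus), add_zero]
  · rw [hb2 s ⟨hs, hus⟩, Finsupp.sub_apply, Finsupp.filter_apply_pos _ _ hs]; ring

theorem Van.upper {P : Finset W → Prop} (hP : Conv P) (u : Finset W → Prop)
    (hu : ∀ s t, s ⊆ t → P s → P t → u s → u t) {n : ℕ}
    (h1 : Van F P (n + 1)) (h2 : Van F (fun s => P s ∧ ¬ u s) n) :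
    Van F (fun s => P s ∧ u s) (n + 1) := by
  intro x hx hbx
  have hxP : Ch P (n + 1) x := hx.mono fun s h => h.1
  obtain ⟨y, hy, hby⟩ := h2 ((bd F x).filter P) (by
    intro s hs
    have h3 := (hx.bd.filter P) s hs
    rw [Finsupp.filter_apply_pos _ _ h3.1.2] at hs
    exact ⟨⟨h3.1.2, fun hus => hs (hbx s ⟨h3.1.2, hus⟩)⟩, h3.2⟩)
    (fun s hs => bd_filter_bd hP hxP s hs.1)
  obtain ⟨z, hz, hbz⟩ := h1 (x - y) (hxP.sub (hy.mono fun s h => h.1)) (by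
    intro s hs
    rw [map_sub, Finsupp.sub_apply]
    by_cases hus : u s
    · rw [hbx s ⟨hs, hus⟩, bd_zero_of hy s fun r hr hsr => hr.2 (hu s r hsr hs hr.1 hus), sub_zero]
    · rw [hby s ⟨hs, hus⟩, Finsupp.filter_apply_pos _ _ hs, sub_self])
  refine ⟨z.filter u, hz.filter u, ?_⟩
  rintro s ⟨hs, hus⟩
  have h3 : bd F (z.filter (fun s => ¬ u s)) s = 0 :=
    bd_zero_of (hz.filter (fun s => ¬ u s)) s fun r hr hsr => hr.2 (hu s r hsr hs hr.1 hus)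
  have h4 := hbz s hs
  rw [bd_split z u, h3, add_zero, Finsupp.sub_apply] at h4
  have h5 : y s = 0 := by
    by_contra hc; exact (hy s hc).1.2 hus
  rw [h4, h5, sub_zero]

theorem Van.summand {P : Finset W → Prop} (u : Finset W → Prop)
    (hu : ∀ s t, s ⊆ t → P s → P t → (u s ↔ u t)) {n : ℕ}
    (h1 : Van F P n) : Van F (fun s => P s ∧ u s) n := by
  intro x hx hbx
  obtain ⟨z, hz, hbz⟩ := h1 x (hx.mono fun s h => h.1) (by
    intro s hs
    by_cases hus : u s
    · exact hbx s ⟨hs, hus⟩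
    · exact bd_zero_of hx s fun r hr hsr => hus ((hu s r hsr hs hr.1).2 hr.2))
  refine ⟨z.filter u, hz.filter u, ?_⟩
  rintro s ⟨hs, hus⟩
  have h3 : bd F (z.filter (fun s => ¬ u s)) s = 0 :=
    bd_zero_of (hz.filter (fun s => ¬ u s)) s fun r hr hsr => hr.2 ((hu s r hsr hs hr.1).1 hus)
  have h4 := hbz s hs
  rw [bd_split z u, h3, add_zero] at h4
  exact h4

variable (F)

/-- coning operator on generators -/
noncomputable def cn1 (e : W) (s : Finset W) : Finset W →₀ F :=
  if e ∈ s then 0 else sg F s e • Finsupp.single (insert e s) (1 : F)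

/-- coning operator -/
noncomputable def cn (e : W) : (Finset W →₀ F) →ₗ[F] (Finset W →₀ F) :=
  Finsupp.linearCombination F (cn1 F e)

theorem cn_single (e : W) (s : Finset W) (a : F) :
    cn F e (Finsupp.single s a) = a • cn1 F e s := by
  simp [cn]

variable {F}
theorem cn_supp (e : W) (x : Finset W →₀ F) (t : Finset W) (h : cn F e x t ≠ 0) :
    ∃ s ∈ x.support, e ∉ s ∧ t = insert e s := by
  by_contra hc
  push Not at hc
  apply h
  unfold cn
  rw [Finsupp.linearCombination_apply, Finsupp.sum, Finsupp.finsetSum_apply]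
  refine Finset.sum_eq_zero fun s hs => ?_
  rw [Finsupp.smul_apply, cn1]
  split_ifs with he
  · simp
  · rw [Finsupp.smul_apply, Finsupp.single_eq_of_ne (hc s hs he), smul_zero, smul_zero]
variable (F)

theorem cn_bd1 (e : W) (s : Finset W) : bd F (cn1 F e s) + cn F e (bd1 F s) = Finsupp.single s 1 := by
  by_cases he : e ∈ s
  · rw [cn1, if_pos he, map_zero, zero_add, bd1, map_sum, Finset.sum_eq_single e]
    · rw [map_smul, cn_single, one_smul, cn1, if_neg (Finset.notMem_erase e s),
        Finset.insert_erase he, smul_smul, sg_erase_ge F s le_rfl, sg_sq, one_smul]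
    · intro v hv hve
      rw [map_smul, cn_single, cn1, if_pos (Finset.mem_erase.2 ⟨Ne.symm hve, he⟩)]; simp
    · exact fun h => absurd he h
  · have h0 : (insert e s).erase e = s := Finset.erase_insert he
    have hse : sg F (insert e s) e = sg F s e := by
      rw [← sg_erase_ge F (insert e s) (le_refl e), h0]
    rw [cn1, if_neg he, map_smul, bd_single, one_smul, bd1, Finset.sum_insert he, h0, smul_add,
      smul_smul, hse, sg_sq, one_smul, bd1, map_sum, add_assoc, Finset.smul_sum,
      ← Finset.sum_add_distrib, Finset.sum_eq_zero, add_zero]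
    intro v hv
    have hve : v ≠ e := fun h => he (h ▸ hv)
    have h1 : (insert e s).erase v = insert e (s.erase v) := by
      rw [Finset.erase_insert_of_ne hve.symm]
    have h2 := sg_swap F (insert e s) (Finset.mem_insert_self e s) (Finset.mem_insert_of_mem hv)
      hve.symm
    rw [h0, hse, h1] at h2
    have he' : e ∉ s.erase v := fun h => he (Finset.mem_of_mem_erase h)
    have h3 : sg F (insert e (s.erase v)) e = sg F (s.erase v) e := by
      rw [← sg_erase_ge F (insert e (s.erase v)) (le_refl e), Finset.erase_insert he']
    rw [h3] at h2
    rw [map_smul, cn_single, one_smul, cn1, if_neg he', h1, smul_smul, smul_smul, ← add_smul]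
    have h4 : sg F s e * sg F (insert e s) v + sg F s v * sg F (s.erase v) e = 0 := by
      have a1 := sg_sq F s v
      have a2 := sg_sq F (insert e s) v
      linear_combination (sg F s v * sg F (insert e s) v) * h2
        - (sg F s e * sg F (insert e s) v) * a1 - (sg F s v * sg F (s.erase v) e) * a2
    rw [h4, zero_smul]

theorem cn_bd (e : W) (x : Finset W →₀ F) : bd F (cn F e x) + cn F e (bd F x) = x := by
  induction x using Finsupp.induction_linear with
  | zero => simp
  | add x y hx hy =>
    simp only [map_add]
    nth_rewrite 3 [← hx]
    nth_rewrite 3 [← hy]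
    abel
  | single s a =>
    rw [bd_single, cn_single, map_smul, map_smul, ← smul_add, cn_bd1]
    simp

variable {F}

theorem Van.cone {P : Finset W → Prop} (e : W) (he : ∀ s, e ∉ s → (P s ↔ P (insert e s))) (n : ℕ) :
    Van F P n := by
  intro x hx hbx
  refine ⟨cn F e x, ?_, ?_⟩
  · intro t ht
    obtain ⟨s, hs, hes, rfl⟩ := cn_supp e x t ht
    have := hx s (by simpa using hs)
    exact ⟨(he s hes).1 this.1, by rw [Finset.card_insert_of_notMem hes, this.2]⟩
  · intro t ht
    have h := congrArg (fun z => z t) (cn_bd F e x)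
    simp only [Finsupp.add_apply] at h
    have h2 : cn F e (bd F x) t = 0 := by
      by_contra hc
      obtain ⟨s, hs, hes, rfl⟩ := cn_supp e _ t hc
      exact (by simpa using hs : bd F x s ≠ 0) (hbx s ((he s hes).2 ht))
    rw [h2, add_zero] at h; exact h

end alg


/-! ### Set operations without instance arguments -/
section setops

/-- intersection -/
noncomputable def rI {α : Type} (s E : Finset α) : Finset α := s.filter fun x => x ∈ E
/-- difference -/
noncomputable def rD {α : Type} (s E : Finset α) : Finset α := s.filter fun x => x ∉ E

theorem mem_rI {α : Type} {s E : Finset α} {x : α} : x ∈ rI s E ↔ x ∈ s ∧ x ∈ E := by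
  simp [rI]

theorem mem_rD {α : Type} {s E : Finset α} {x : α} : x ∈ rD s E ↔ x ∈ s ∧ x ∉ E := by
  simp [rD]

theorem rI_sub {α : Type} (s E : Finset α) : rI s E ⊆ E := fun x hx => (mem_rI.1 hx).2
theorem rI_sub' {α : Type} (s E : Finset α) : rI s E ⊆ s := fun x hx => (mem_rI.1 hx).1
theorem rD_sub {α : Type} (s E : Finset α) : rD s E ⊆ s := fun x hx => (mem_rD.1 hx).1
theorem rI_mono {α : Type} {s t : Finset α} (h : s ⊆ t) (E : Finset α) : rI s E ⊆ rI t E :=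
  fun x hx => mem_rI.2 ⟨h (mem_rI.1 hx).1, (mem_rI.1 hx).2⟩
theorem rD_mono {α : Type} {s t : Finset α} (h : s ⊆ t) (E : Finset α) : rD s E ⊆ rD t E :=
  fun x hx => mem_rD.2 ⟨h (mem_rD.1 hx).1, (mem_rD.1 hx).2⟩
theorem rI_eq {α : Type} {s E : Finset α} (h : s ⊆ E) : rI s E = s := by
  ext x; rw [mem_rI]; exact ⟨fun h => h.1, fun hx => ⟨hx, h hx⟩⟩

end setops

section svs

/-- convexity inside a ground set -/
def ConvOn (E : Finset W) (P : Finset W → Prop) : Prop :=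
  ∀ s t r, s ⊆ t → t ⊆ r → r ⊆ E → P s → P r → P t

/-- monotonicity inside a ground set -/
def MonoOn (E : Finset W) (P : Finset W → Prop) {α : Type} [LE α] (f : Finset W → α) : Prop :=
  ∀ s t, s ⊆ t → t ⊆ E → P s → P t → f s ≤ f t

/-- stable vanishing above `b` -/
def SV (E : Finset W) (P : Finset W → Prop) (b : ℕ) : Prop :=
  ∀ Q : Finset W → Prop, Conv Q → (∀ s, Q s → ∀ x ∈ s, x ∉ E) → ∀ g, (∀ n, g < n → Van F Q n) →
    ∀ n, g + b < n → Van F (fun s => Q (rD s E) ∧ P (rI s E)) n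

variable {F}

theorem SV.congr {E : Finset W} {P P' : Finset W → Prop} {b : ℕ} (h : SV F E P b)
    (hp : ∀ s, s ⊆ E → (P' s ↔ P s)) : SV F E P' b := by
  intro Q hQ hd g hg n hn
  refine (h Q hQ hd g hg n hn).congr fun s => ?_
  rw [hp _ (rI_sub s E)]

theorem SV.mono {E : Finset W} {P : Finset W → Prop} {b b' : ℕ} (h : SV F E P b)
    (hb : b ≤ b') : SV F E P b' :=
  fun Q hQ hd g hg n hn => h Q hQ hd g hg n (by omega)

theorem Van.empty {P : Finset W → Prop} (h : ∀ s, ¬ P s) (n : ℕ) : Van F P n := by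
  intro x hx _
  refine ⟨0, fun s hs => absurd rfl hs, fun s hs => absurd hs (h s)⟩

theorem SV.empty {E : Finset W} {P : Finset W → Prop} (h : ∀ s, s ⊆ E → ¬ P s) (b : ℕ) :
    SV F E P b := fun _ _ _ _ _ n _ => Van.empty (fun s hs => h _ (rI_sub s E) hs.2) n

theorem SV.base {E : Finset W} {P : Finset W → Prop} (h : ∀ s, s ⊆ E → (P s ↔ s = ∅)) :
    SV F E P 0 := by
  intro Q hQ hd g hg n hn
  refine (hg n (by omega)).congr fun s => ?_
  rw [h _ (rI_sub s E)]
  have key : rI s E = ∅ → rD s E = s := by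
    intro h0
    ext x; rw [mem_rD]
    refine ⟨fun h => h.1, fun hx => ⟨hx, fun hxE => ?_⟩⟩
    have : x ∈ rI s E := mem_rI.2 ⟨hx, hxE⟩
    rw [h0] at this; simp at this
  constructor
  · intro hs
    have h0 : rI s E = ∅ := by
      rw [Finset.eq_empty_iff_forall_notMem]
      intro x hx; rw [mem_rI] at hx; exact hd s hs x hx.1 hx.2
    exact ⟨by rwa [key h0], h0⟩
  · rintro ⟨h1, h2⟩; rwa [key h2] at h1

theorem SV.van {E : Finset W} {P : Finset W → Prop} {b : ℕ} (h : SV F E P b) (n : ℕ) (hn : b < n) :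
    Van F (fun s => s ⊆ E ∧ P s) n := by
  have h1 := h (fun s => s = ∅) (by
    rintro s t r hst htr rfl rfl
    exact Finset.subset_empty.1 htr) (by rintro s rfl x hx; simp at hx) 0 (by
    intro n hn x hx _
    refine ⟨0, fun s hs => absurd rfl hs, ?_⟩
    rintro s rfl
    by_contra hc
    have := hx ∅ (fun h => hc (by rw [h]; simp))
    simp at this; omega) n (by omega)
  refine h1.congr fun s => ?_
  have key : rD s E = ∅ ↔ s ⊆ E := by
    rw [Finset.eq_empty_iff_forall_notMem]
    simp only [mem_rD, not_and, not_not]; rfl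
  rw [key]
  constructor
  · rintro ⟨h, h'⟩; rw [rI_eq h] at h'; exact ⟨h, h'⟩
  · rintro ⟨h, h'⟩; rw [rI_eq h]; exact ⟨h, h'⟩

theorem Conv.join {Q : Finset W → Prop} (hQ : Conv Q) {E : Finset W} {P : Finset W → Prop}
    (hP : ConvOn E P) : Conv (fun s => Q (rD s E) ∧ P (rI s E)) := by
  rintro s t r hst htr ⟨h1, h2⟩ ⟨h3, h4⟩
  exact ⟨hQ _ _ _ (rD_mono hst E) (rD_mono htr E) h1 h3,
    hP _ _ _ (rI_mono hst E) (rI_mono htr E) (rI_sub r E) h2 h4⟩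

theorem SV.glue {E : Finset W} {P : Finset W → Prop} (hP : ConvOn E P) (u : Finset W → Prop)
    (hu : MonoOn E P u) {b : ℕ} (h1 : SV F E (fun s => P s ∧ u s) b)
    (h2 : SV F E (fun s => P s ∧ ¬ u s) b) : SV F E P b := by
  intro Q hQ hd g hg n hn
  refine Van.glue (hQ.join hP) (fun s => u (rI s E)) ?_ ?_ ?_
  · intro s t hst hs ht hus
    exact hu _ _ (rI_mono hst E) (rI_sub t E) hs.2 ht.2 hus
  · exact (h1 Q hQ hd g hg n hn).congr fun s => by tauto
  · exact (h2 Q hQ hd g hg n hn).congr fun s => by tauto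

theorem SV.upper {E : Finset W} {P : Finset W → Prop} (hP : ConvOn E P) (u : Finset W → Prop)
    (hu : MonoOn E P u) {b : ℕ} (h1 : SV F E P (b + 1))
    (h2 : SV F E (fun s => P s ∧ ¬ u s) b) : SV F E (fun s => P s ∧ u s) (b + 1) := by
  intro Q hQ hd g hg n hn
  obtain ⟨n, rfl⟩ : ∃ k, n = k + 1 := ⟨n - 1, by omega⟩
  have := Van.upper (hQ.join hP) (fun s => u (rI s E)) (by
    intro s t hst hs ht hus
    exact hu _ _ (rI_mono hst E) (rI_sub t E) hs.2 ht.2 hus) (h1 Q hQ hd g hg (n + 1) hn)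
    ((h2 Q hQ hd g hg n (by omega)).congr fun s => by tauto)
  exact this.congr fun s => by tauto

theorem SV.summand {E : Finset W} {P : Finset W → Prop} (u : Finset W → Prop)
    (hu : ∀ s t, s ⊆ t → t ⊆ E → P s → P t → (u s ↔ u t)) {b : ℕ} (h1 : SV F E P b) :
    SV F E (fun s => P s ∧ u s) b := by
  intro Q hQ hd g hg n hn
  have := Van.summand (fun s => u (rI s E)) (by
    intro s t hst hs ht
    exact hu _ _ (rI_mono hst E) (rI_sub t E) hs.2 ht.2) (h1 Q hQ hd g hg n hn)
  exact this.congr fun s => by tauto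

theorem SV.cone {E : Finset W} {P : Finset W → Prop} (e : W) (heE : e ∈ E)
    (he : ∀ s (h : e ∉ s), s ⊆ E → (P s ↔ P (Finset.cons e s h))) (b : ℕ) : SV F E P b := by
  intro Q hQ hd g hg n hn
  refine Van.cone e ?_ n
  intro s hes
  have h1 : rD (insert e s) E = rD s E := by
    ext x; simp only [mem_rD, Finset.mem_insert]
    constructor
    · rintro ⟨rfl | h, h'⟩
      · exact absurd heE h'
      · exact ⟨h, h'⟩
    · tauto
  have h0 : e ∉ rI s E := fun h => hes (mem_rI.1 h).1
  have h2 : rI (insert e s) E = Finset.cons e (rI s E) h0 := by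
    ext x; simp only [mem_rI, Finset.mem_insert, Finset.mem_cons]
    constructor
    · tauto
    · rintro (rfl | h)
      · exact ⟨Or.inl rfl, heE⟩
      · tauto
  rw [h1, h2, he (rI s E) h0 (rI_sub s E)]

theorem ConvOn.fibre {E : Finset W} {P : Finset W → Prop} (hP : ConvOn E P) {α : Type}
    [PartialOrder α] {f : Finset W → α} (hf : MonoOn E P f) (a : α) :
    ConvOn E (fun s => P s ∧ f s = a) := by
  rintro s t r hst htr hr ⟨h1, h2⟩ ⟨h3, h4⟩
  have h5 := hP s t r hst htr hr h1 h3
  exact ⟨h5, le_antisymm (h4 ▸ hf t r htr hr h5 h3) (h2 ▸ hf s t hst (htr.trans hr) h1 h5)⟩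

theorem SV.strat_aux {E : Finset W} {α : Type} [PartialOrder α] (f : Finset W → α) {b : ℕ}
    (N : ℕ) : ∀ (A : Finset α) (P : Finset W → Prop), A.card = N → ConvOn E P → MonoOn E P f →
    (∀ s, s ⊆ E → P s → f s ∈ A) → (∀ a, SV F E (fun s => P s ∧ f s = a) b) → SV F E P b := by
  induction N with
  | zero =>
    intro A P hA hP hf hfA h
    rw [Finset.card_eq_zero] at hA
    subst hA
    exact SV.empty (fun s hs hPs => by simpa using hfA s hs hPs) b
  | succ N ih =>
    intro A P hA hP hf hfA h
    have hne : A.Nonempty := by rw [← Finset.card_pos]; omega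
    obtain ⟨a, ha⟩ := A.exists_maximal hne
    have key : ∀ t r, t ⊆ r → r ⊆ E → P t → P r → f t = a → f r = a := by
      intro t r htr hr hPt hPr hta
      have h1 := hf t r htr hr hPt hPr
      rw [hta] at h1
      exact le_antisymm (ha.2 (hfA r hr hPr) h1) h1
    refine SV.glue hP (fun s => f s = a) ?_ (h a) ?_
    · intro s t hst ht hs hPt hsa
      exact key s t hst ht hs hPt hsa
    · refine ih (A.erase a) _ ?_ ?_ ?_ ?_ ?_
      · rw [Finset.card_erase_of_mem ha.1]; omega
      · rintro s t r hst htr hr ⟨h1, h2⟩ ⟨h3, h4⟩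
        have h5 := hP s t r hst htr hr h1 h3
        exact ⟨h5, fun h => h4 (key t r htr hr h5 h3 h)⟩
      · intro s t hst ht hs hPt
        exact hf s t hst ht hs.1 hPt.1
      · intro s hs hPs
        exact Finset.mem_erase.2 ⟨hPs.2, hfA s hs hPs.1⟩
      · intro c
        by_cases hc : c = a
        · exact SV.empty (fun s _ hPs => hPs.1.2 (hPs.2.trans hc)) b
        · refine (h c).congr fun s _ => ?_
          constructor
          · tauto
          · rintro ⟨h1, h2⟩; exact ⟨⟨h1, fun h => hc (h2.symm.trans h)⟩, h2⟩

theorem SV.strat {E : Finset W} {P : Finset W → Prop} {α : Type} [PartialOrder α]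
    (f : Finset W → α) {b : ℕ} (hP : ConvOn E P) (hf : MonoOn E P f)
    (h : ∀ a, SV F E (fun s => P s ∧ f s = a) b) : SV F E P b := by
  refine SV.strat_aux f _ (E.powerset.image f) P rfl hP hf ?_ h
  intro s hs _
  exact Finset.mem_image_of_mem f (Finset.mem_powerset.2 hs)

theorem SV.prod {E E1 E2 : Finset W} {P P1 P2 : Finset W → Prop} {b1 b2 b : ℕ}
    (hE : ∀ x, x ∈ E ↔ x ∈ E1 ∨ x ∈ E2) (hd : ∀ x, x ∈ E1 → x ∉ E2) (hc : ConvOn E1 P1)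
    (hP : ∀ s, s ⊆ E → (P s ↔ P1 (rI s E1) ∧ P2 (rI s E2)))
    (h1 : SV F E1 P1 b1) (h2 : SV F E2 P2 b2) (hb : b1 + b2 ≤ b) : SV F E P b := by
  intro Q hQ hQd g hg n hn
  have h3 := h1 Q hQ (fun s hs x hx hx1 => hQd s hs x hx ((hE x).2 (Or.inl hx1))) g hg
  have h4 := h2 (fun s => Q (rD s E1) ∧ P1 (rI s E1)) (hQ.join hc) (by
    rintro s ⟨hs, _⟩ x hx hx2
    exact hQd _ hs x (mem_rD.2 ⟨hx, fun h => hd x h hx2⟩) ((hE x).2 (Or.inr hx2))) (g + b1) h3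
    n (by omega)
  refine h4.congr fun s => ?_
  have e1 : rD (rD s E2) E1 = rD s E := by
    ext x; simp only [mem_rD, hE]; tauto
  have e2 : rI (rI s E) E1 = rI (rD s E2) E1 := by
    ext x; simp only [mem_rD, mem_rI, hE]
    have := hd x; tauto
  have e3 : rI (rI s E) E2 = rI s E2 := by
    ext x; simp only [mem_rI, hE]; tauto
  rw [hP _ (rI_sub s E), e1, e2, e3]; tauto

theorem ConvOn.prod {E E1 E2 : Finset W} {P1 P2 : Finset W → Prop} (h1 : ConvOn E1 P1)
    (h2 : ConvOn E2 P2) : ConvOn E (fun s => P1 (rI s E1) ∧ P2 (rI s E2)) := by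
  rintro s t r hst htr hr ⟨a, b⟩ ⟨c, d⟩
  exact ⟨h1 _ _ _ (rI_mono hst _) (rI_mono htr _) (rI_sub _ _) a c,
    h2 _ _ _ (rI_mono hst _) (rI_mono htr _) (rI_sub _ _) b d⟩

theorem ConvOn.congr {E : Finset W} {P P' : Finset W → Prop} (h : ConvOn E P)
    (hp : ∀ s, s ⊆ E → (P' s ↔ P s)) : ConvOn E P' := by
  intro s t r hst htr hr h1 h2
  rw [hp s (hst.trans (htr.trans hr))] at h1
  rw [hp r hr] at h2
  rw [hp t (htr.trans hr)]
  exact h s t r hst htr hr h1 h2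

theorem SV.nonempty (E : Finset W) : SV F E (fun s => s ≠ ∅) 1 := by
  rcases E.eq_empty_or_nonempty with rfl | ⟨e, he⟩
  · exact SV.empty (fun s hs h => h (Finset.subset_empty.1 hs)) 1
  · have := SV.upper (F := F) (E := E) (P := fun _ => True) (b := 0) (fun _ _ _ _ _ _ _ _ => trivial)
      (fun s => s ≠ ∅) (by
        intro s t hst _ _ _ hs ht
        exact hs (Finset.subset_empty.1 (ht ▸ hst))) (SV.cone e he (fun _ _ _ => Iff.rfl) _)
      (SV.base (fun s _ => by tauto))
    exact this.congr fun s _ => by tauto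

end svs


theorem SV.restrict {F : Type} [Field F] {E E' : Finset W} {P : Finset W → Prop} {b : ℕ}
    (hE : E' ⊆ E) (hc : ConvOn E' P) (h : SV F E' P b) :
    SV F E (fun s => s ⊆ E' ∧ P s) b := by
  refine SV.prod (E1 := E') (E2 := rD E E') (P1 := P) (P2 := fun s => s = ∅) ?_ ?_ hc ?_ h
    (SV.base fun _ _ => Iff.rfl) le_rfl
  · intro x; rw [mem_rD]
    constructor
    · intro hx; by_cases h : x ∈ E' <;> tauto
    · rintro (h | h)
      · exact hE h
      · exact h.1
  · intro x hx h2; exact (mem_rD.1 h2).2 hx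
  · intro s hs
    have h1 : rI s (rD E E') = ∅ ↔ s ⊆ E' := by
      rw [Finset.eq_empty_iff_forall_notMem]
      constructor
      · intro h x hx
        by_contra hc
        exact h x (mem_rI.2 ⟨hx, mem_rD.2 ⟨hs hx, hc⟩⟩)
      · intro h x hx
        rw [mem_rI, mem_rD] at hx
        exact hx.2.2 (h hx.1)
    rw [h1]
    constructor
    · rintro ⟨a, b⟩; rw [rI_eq a]; exact ⟨b, a⟩
    · rintro ⟨a, b⟩; rw [rI_eq b] at a; exact ⟨b, a⟩

/-! ### Hall and positive-surplus families of bipartite graphs -/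
section hall
variable {α π : Type} (ae : W → α) (pe : W → π)

/-- neighbourhood -/
noncomputable def Nb (β : Finset W) (S : Finset α) : Finset π :=
  (β.filter fun e => ae e ∈ S).image pe

/-- Hall condition -/
def Hall (A : Finset α) (β : Finset W) : Prop := ∀ S, S ⊆ A → S.card ≤ (Nb ae pe β S).card

/-- positive surplus -/
def PS (A : Finset α) (β : Finset W) : Prop :=
  ∀ S, S ⊆ A → S.Nonempty → S.card < (Nb ae pe β S).card

/-- largest tight set -/
noncomputable def S0 (A : Finset α) (β : Finset W) : Finset α :=
  (A.powerset.filter fun S => (Nb ae pe β S).card = S.card).biUnion id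

/-- neighbourhood of the largest tight set -/
noncomputable def P0 (A : Finset α) (β : Finset W) : Finset π := Nb ae pe β (S0 ae pe A β)

variable {ae pe}

theorem mem_Nb {β : Finset W} {S : Finset α} {p : π} :
    p ∈ Nb ae pe β S ↔ ∃ e ∈ β, ae e ∈ S ∧ pe e = p := by
  simp [Nb, and_assoc]

theorem Nb_mono {β β' : Finset W} (h : β ⊆ β') {S S' : Finset α} (h' : S ⊆ S') :
    Nb ae pe β S ⊆ Nb ae pe β' S' := by
  intro p; simp only [mem_Nb]
  rintro ⟨e, he, a, b⟩; exact ⟨e, h he, h' a, b⟩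

theorem Nb_union (β : Finset W) (S T : Finset α) :
    Nb ae pe β (S ∪ T) = Nb ae pe β S ∪ Nb ae pe β T := by
  ext p; simp only [mem_Nb, Finset.mem_union]
  constructor
  · rintro ⟨e, he, a | a, b⟩
    · exact Or.inl ⟨e, he, a, b⟩
    · exact Or.inr ⟨e, he, a, b⟩
  · rintro (⟨e, he, a, b⟩ | ⟨e, he, a, b⟩)
    · exact ⟨e, he, Or.inl a, b⟩
    · exact ⟨e, he, Or.inr a, b⟩

theorem Hall.mono {A : Finset α} {β β' : Finset W} (h : Hall ae pe A β) (hb : β ⊆ β') :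
    Hall ae pe A β' := fun S hS => (h S hS).trans (Finset.card_le_card (Nb_mono hb (Finset.Subset.refl S)))

theorem PS.mono {A : Finset α} {β β' : Finset W} (h : PS ae pe A β) (hb : β ⊆ β') :
    PS ae pe A β' := fun S hS hn =>
  (h S hS hn).trans_le (Finset.card_le_card (Nb_mono hb (Finset.Subset.refl S)))

theorem Hall.convOn (E : Finset W) (A : Finset α) : ConvOn E (Hall ae pe A) :=
  fun _ _ _ hst _ _ h1 _ => h1.mono hst

theorem PS.convOn (E : Finset W) (A : Finset α) : ConvOn E (PS ae pe A) :=
  fun _ _ _ hst _ _ h1 _ => h1.mono hst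

theorem PS.hall {A : Finset α} {β : Finset W} (h : PS ae pe A β) : Hall ae pe A β := by
  intro S hS
  rcases S.eq_empty_or_nonempty with rfl | hn
  · simp
  · exact (h S hS hn).le

theorem tight_union {A : Finset α} {β : Finset W} (h : Hall ae pe A β) {S T : Finset α}
    (hS : S ⊆ A) (hT : T ⊆ A) (h1 : (Nb ae pe β S).card = S.card)
    (h2 : (Nb ae pe β T).card = T.card) : (Nb ae pe β (S ∪ T)).card = (S ∪ T).card := by
  have a1 := h (S ∪ T) (Finset.union_subset hS hT)
  have a2 := h (S ∩ T) (Finset.inter_subset_left.trans hS)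
  have a3 : (Nb ae pe β (S ∩ T)).card ≤ (Nb ae pe β S ∩ Nb ae pe β T).card :=
    Finset.card_le_card (Finset.subset_inter (Nb_mono (Finset.Subset.refl _) Finset.inter_subset_left)
      (Nb_mono (Finset.Subset.refl _) Finset.inter_subset_right))
  have a4 := Finset.card_union_add_card_inter (Nb ae pe β S) (Nb ae pe β T)
  have a5 := Finset.card_union_add_card_inter S T
  rw [Nb_union] at a1 ⊢
  omega

theorem S0_sub (A : Finset α) (β : Finset W) : S0 ae pe A β ⊆ A := by
  intro x hx
  simp only [S0, Finset.mem_biUnion, Finset.mem_filter, Finset.mem_powerset, id] at hx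
  obtain ⟨S, hS, hx⟩ := hx
  exact hS.1 hx

theorem sub_S0 {A : Finset α} {β : Finset W} {S : Finset α} (hS : S ⊆ A)
    (h : (Nb ae pe β S).card = S.card) : S ⊆ S0 ae pe A β := by
  intro x hx
  simp only [S0, Finset.mem_biUnion, Finset.mem_filter, Finset.mem_powerset, id]
  exact ⟨S, ⟨hS, h⟩, hx⟩

theorem S0_tight {A : Finset α} {β : Finset W} (h : Hall ae pe A β) :
    (Nb ae pe β (S0 ae pe A β)).card = (S0 ae pe A β).card := by
  have key : ∀ C : Finset (Finset α), (∀ S ∈ C, S ⊆ A ∧ (Nb ae pe β S).card = S.card) →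
      (C.biUnion id ⊆ A ∧ (Nb ae pe β (C.biUnion id)).card = (C.biUnion id).card) := by
    intro C
    induction C using Finset.induction_on with
    | empty => intro _; simp [Nb]
    | insert S C _ ih =>
      intro hC
      have h1 := ih fun S hS => hC S (Finset.mem_insert_of_mem hS)
      have h2 := hC S (Finset.mem_insert_self S C)
      rw [Finset.biUnion_insert]
      exact ⟨Finset.union_subset h2.1 h1.1, tight_union h h2.1 h1.1 h2.2 h1.2⟩
  exact (key _ (by
    intro S hS
    simp only [Finset.mem_filter, Finset.mem_powerset] at hS
    exact hS)).2

theorem S0_anti {A : Finset α} {β β' : Finset W} (hb : β ⊆ β') (h : Hall ae pe A β)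
    (h' : Hall ae pe A β') : S0 ae pe A β' ⊆ S0 ae pe A β ∧ P0 ae pe A β' ⊆ P0 ae pe A β := by
  have h1 := S0_tight h'
  have h2 := h _ (S0_sub (ae := ae) (pe := pe) A β')
  have h3 : Nb ae pe β (S0 ae pe A β') ⊆ Nb ae pe β' (S0 ae pe A β') :=
    Nb_mono hb (Finset.Subset.refl _)
  have h4 := Finset.card_le_card h3
  have h5 : S0 ae pe A β' ⊆ S0 ae pe A β := sub_S0 (S0_sub A β') (by omega)
  refine ⟨h5, ?_⟩
  have h6 := Finset.eq_of_subset_of_card_le h3 (by omega)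
  unfold P0
  rw [← h6]
  exact Nb_mono (Finset.Subset.refl _) h5

theorem PS_iff {A : Finset α} {β : Finset W} :
    PS ae pe A β ↔ Hall ae pe A β ∧ S0 ae pe A β = ∅ := by
  constructor
  · intro h
    refine ⟨h.hall, ?_⟩
    by_contra hc
    have h1 := h _ (S0_sub A β) (Finset.nonempty_iff_ne_empty.2 hc)
    have h2 := S0_tight h.hall
    omega
  · rintro ⟨h, h0⟩ S hS hn
    refine lt_of_le_of_ne (h S hS) fun heq => ?_
    have := sub_S0 hS heq.symm
    rw [h0] at this
    exact hn.ne_empty (Finset.subset_empty.1 this)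

/-- description of a stratum -/
theorem stratum_iff {A : Finset α} {β : Finset W} (hβ : ∀ e ∈ β, ae e ∈ A) {S : Finset α}
    (hS : S ⊆ A) {p : Finset π} :
    (Hall ae pe A β ∧ S0 ae pe A β = S ∧ P0 ae pe A β = p) ↔
    (p.card = S.card ∧ (∀ e ∈ β, ae e ∈ S → pe e ∈ p) ∧
      Hall ae pe S (β.filter fun e => ae e ∈ S) ∧
      PS ae pe (rD A S) (β.filter fun e => ae e ∉ S ∧ pe e ∉ p)) := by
  constructor
  · rintro ⟨h, rfl, rfl⟩
    refine ⟨S0_tight h, ?_, ?_, ?_⟩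
    · intro e he hes; exact mem_Nb.2 ⟨e, he, hes, rfl⟩
    · intro T hT
      refine (h T (hT.trans hS)).trans (Finset.card_le_card ?_)
      intro q; simp only [mem_Nb, Finset.mem_filter]
      rintro ⟨e, he, a, b⟩; exact ⟨e, ⟨he, hT a⟩, a, b⟩
    · intro T hT hn
      have hd : Disjoint (S0 ae pe A β) T := by
        rw [Finset.disjoint_right]; intro x hx; exact (mem_rD.1 (hT hx)).2
      have hU : S0 ae pe A β ∪ T ⊆ A := Finset.union_subset hS (hT.trans (rD_sub _ _))
      have h1 := h _ hU
      have h2 : (Nb ae pe β (S0 ae pe A β ∪ T)).card ≠ (S0 ae pe A β ∪ T).card := by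
        intro h3
        obtain ⟨x, hx⟩ := hn
        exact (mem_rD.1 (hT hx)).2 (sub_S0 hU h3 (Finset.mem_union_right _ hx))
      have h3 := S0_tight h
      rw [Finset.card_union_of_disjoint hd] at h1 h2
      have h4 : Nb ae pe β (S0 ae pe A β ∪ T) ⊆ Nb ae pe β (S0 ae pe A β) ∪
          Nb ae pe (β.filter fun e => ae e ∉ S0 ae pe A β ∧ pe e ∉ P0 ae pe A β) T := by
        intro q
        by_cases hq : q ∈ Nb ae pe β (S0 ae pe A β)
        · intro _; exact Finset.mem_union_left _ hq
        · intro hq2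
          refine Finset.mem_union_right _ ?_
          obtain ⟨e, he, a, b⟩ := mem_Nb.1 hq2
          have a' : ae e ∉ S0 ae pe A β := fun hh => hq (mem_Nb.2 ⟨e, he, hh, b⟩)
          refine mem_Nb.2 ⟨e, Finset.mem_filter.2 ⟨he, a', ?_⟩, ?_, b⟩
          · rw [b]; exact hq
          · exact (Finset.mem_union.1 a).resolve_left a'
      have h5 := (Finset.card_le_card h4).trans (Finset.card_union_le _ _)
      omega
  · rintro ⟨hc, hp, h1, h2⟩
    have big : ∀ T, T ⊆ A → (Nb ae pe (β.filter fun e => ae e ∈ S) (rI T S)).card +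
        (Nb ae pe (β.filter fun e => ae e ∉ S ∧ pe e ∉ p) (rD T S)).card ≤ (Nb ae pe β T).card := by
      intro T hT
      rw [← Finset.card_union_of_disjoint]
      · refine Finset.card_le_card ?_
        intro q; simp only [Finset.mem_union, mem_Nb, Finset.mem_filter, mem_rI, mem_rD]
        rintro (⟨e, he, a, b⟩ | ⟨e, he, a, b⟩)
        · exact ⟨e, he.1, a.1, b⟩
        · exact ⟨e, he.1, a.1, b⟩
      · rw [Finset.disjoint_left]
        intro q; simp only [mem_Nb, Finset.mem_filter]
        rintro ⟨e, he, a, b⟩ ⟨e', he', a', b'⟩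
        apply he'.2.2; rw [b', ← b]; exact hp e he.1 he.2
    have split : ∀ T : Finset α, (rI T S).card + (rD T S).card = T.card := by
      intro T
      unfold rI rD
      exact Finset.card_filter_add_card_filter_not _
    have hH : Hall ae pe A β := by
      intro T hT
      have a1 := big T hT
      have a2 := split T
      have a3 := h1 _ (rI_sub T S)
      have a4 := h2.hall _ (rD_mono hT S)
      omega
    have hNS : Nb ae pe β S = p := by
      refine Finset.eq_of_subset_of_card_le ?_ ?_
      · intro q hq
        obtain ⟨e, he, a, b⟩ := mem_Nb.1 hq
        rw [← b]; exact hp e he a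
      · rw [hc]; exact hH S hS
    have hSS : S ⊆ S0 ae pe A β := sub_S0 hS (by rw [hNS, hc])
    have hS0 : S0 ae pe A β = S := by
      by_contra hne
      have hn : (rD (S0 ae pe A β) S).Nonempty := by
        by_contra hh
        rw [Finset.not_nonempty_iff_eq_empty, Finset.eq_empty_iff_forall_notMem] at hh
        refine hne (Finset.Subset.antisymm ?_ hSS)
        intro x hx
        by_contra hxS
        exact hh x (mem_rD.2 ⟨hx, hxS⟩)
      have a1 := big _ (S0_sub (ae := ae) (pe := pe) A β)
      have a2 := split (S0 ae pe A β)
      have a3 := h1 _ (rI_sub (S0 ae pe A β) S)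
      have a4 := h2 _ (rD_mono (S0_sub A β) S) hn
      have a5 := S0_tight hH
      omega
    refine ⟨hH, hS0, ?_⟩
    unfold P0; rw [hS0, hNS]

variable {F}

theorem SV.stratum {A : Finset α} {S : Finset α} (hS : S ⊆ A) (hn : S.Nonempty)
    (h1 : ∀ E : Finset W, (∀ e ∈ E, ae e ∈ S) → SV F E (Hall ae pe S) (2 * S.card - 1))
    (h2 : ∀ E : Finset W, (∀ e ∈ E, ae e ∈ rD A S) →
      SV F E (PS ae pe (rD A S)) (2 * (rD A S).card))
    (E : Finset W) (hE : ∀ e ∈ E, ae e ∈ A) (p : Finset π) :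
    SV F E (fun β => Hall ae pe A β ∧ S0 ae pe A β = S ∧ P0 ae pe A β = p) (2 * A.card - 1) := by
  refine SV.congr (P := fun β => (p.card = S.card ∧ (∀ e ∈ β, ae e ∈ S → pe e ∈ p) ∧
      Hall ae pe S (β.filter fun e => ae e ∈ S) ∧
      PS ae pe (rD A S) (β.filter fun e => ae e ∉ S ∧ pe e ∉ p))) ?_
    (fun β hβ => stratum_iff (fun e he => hE e (hβ he)) hS)
  by_cases hpc : p.card = S.card
  swap
  · exact SV.empty (fun _ _ h => hpc h.1) _
  by_cases hex : ∃ e ∈ E, ae e ∉ S ∧ pe e ∈ p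
  · obtain ⟨e, heE, hea, hep⟩ := hex
    refine SV.cone e heE ?_ _
    intro s hes hs
    have e1 : ((Finset.cons e s hes).filter fun e => ae e ∈ S) = s.filter fun e => ae e ∈ S := by
      ext x; simp only [Finset.mem_filter, Finset.mem_cons]
      constructor
      · rintro ⟨rfl | h, h'⟩
        · exact absurd h' hea
        · exact ⟨h, h'⟩
      · tauto
    have e2 : ((Finset.cons e s hes).filter fun e => ae e ∉ S ∧ pe e ∉ p) =
        s.filter fun e => ae e ∉ S ∧ pe e ∉ p := by
      ext x; simp only [Finset.mem_filter, Finset.mem_cons]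
      constructor
      · rintro ⟨rfl | h, h'⟩
        · exact absurd hep h'.2
        · exact ⟨h, h'⟩
      · tauto
    rw [e1, e2]
    simp only [Finset.mem_cons, forall_eq_or_imp]
    tauto
  · push Not at hex
    have a2 : (rI A S).card + (rD A S).card = A.card := Finset.card_filter_add_card_filter_not _
    have a3 : rI A S = S := by
      ext x; rw [mem_rI]; exact ⟨fun h => h.2, fun h => ⟨hS h, h⟩⟩
    have hn' := hn.card_pos
    rw [a3] at a2
    have hr := SV.restrict (E := E.filter fun e => ae e ∈ S)
      (E' := E.filter fun e => ae e ∈ S ∧ pe e ∈ p) (F := F) (P := Hall ae pe S)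
      (by
        intro x hx
        rw [Finset.mem_filter] at hx ⊢
        exact ⟨hx.1, hx.2.1⟩) (Hall.convOn _ _)
      (h1 _ (fun e he => (Finset.mem_filter.1 he).2.1))
    refine SV.prod (E1 := E.filter fun e => ae e ∈ S) (E2 := E.filter fun e => ae e ∉ S)
      (P2 := PS ae pe (rD A S)) ?_ ?_ ?_ ?_ hr
      (h2 _ (fun e he => mem_rD.2 ⟨hE e (Finset.mem_filter.1 he).1, (Finset.mem_filter.1 he).2⟩)) ?_
    · intro x; simp only [Finset.mem_filter]; tauto
    · intro x; simp only [Finset.mem_filter]; tauto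
    · rintro s t r hst htr hr ⟨a, b⟩ ⟨c, d⟩
      exact ⟨htr.trans c, b.mono hst⟩
    · intro s hs
      have e1 : rI s (E.filter fun e => ae e ∈ S) = s.filter fun e => ae e ∈ S := by
        ext x; simp only [Finset.mem_filter, mem_rI]; have := @hs x; tauto
      have e2 : rI s (E.filter fun e => ae e ∉ S) = s.filter fun e => ae e ∉ S ∧ pe e ∉ p := by
        ext x; simp only [Finset.mem_filter, mem_rI]; have := @hs x; have := hex x; tauto
      have e3 : s.filter (fun e => ae e ∈ S) ⊆ E.filter (fun e => ae e ∈ S ∧ pe e ∈ p) ↔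
          ∀ e ∈ s, ae e ∈ S → pe e ∈ p := by
        simp only [Finset.subset_iff, Finset.mem_filter]
        constructor
        · intro h e he hes; exact (h ⟨he, hes⟩).2.2
        · rintro h e ⟨he, hes⟩; exact ⟨hs he, hes, h e he hes⟩
      rw [e1, e2, e3]
      tauto
    · omega

theorem hall_step_iff {A : Finset α} {a : α} (ha : a ∈ A) {β : Finset W} :
    Hall ae pe A β ↔ Hall ae pe (A.erase a) (β.filter fun e => ae e ≠ a) ∧
      ∃ e ∈ β, ae e = a ∧ pe e ∉ P0 ae pe (A.erase a) (β.filter fun e => ae e ≠ a) := by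
  have hN : ∀ S, S ⊆ A.erase a → Nb ae pe (β.filter fun e => ae e ≠ a) S = Nb ae pe β S := by
    intro S hS
    ext q; simp only [mem_Nb, Finset.mem_filter]
    constructor
    · rintro ⟨e, he, h⟩; exact ⟨e, he.1, h⟩
    · rintro ⟨e, he, h⟩
      exact ⟨e, ⟨he, (Finset.mem_erase.1 (hS h.1)).1⟩, h⟩
  constructor
  · intro h
    have hH : Hall ae pe (A.erase a) (β.filter fun e => ae e ≠ a) := by
      intro S hS
      rw [hN S hS]; exact h S (hS.trans (Finset.erase_subset _ _))
    refine ⟨hH, ?_⟩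
    by_contra hc
    push Not at hc
    have hsub := S0_sub (ae := ae) (pe := pe) (A.erase a) (β.filter fun e => ae e ≠ a)
    have ht := S0_tight hH
    unfold P0 at hc
    generalize hSS : S0 ae pe (A.erase a) (β.filter fun e => ae e ≠ a) = S at *
    have haS : a ∉ S := fun h => by simpa using hsub h
    have h1 := h (insert a S) (Finset.insert_subset ha (hsub.trans (Finset.erase_subset _ _)))
    rw [Finset.card_insert_of_notMem haS] at h1
    have h2 : Nb ae pe β (insert a S) ⊆ Nb ae pe (β.filter fun e => ae e ≠ a) S := by
      intro q hq
      obtain ⟨e, he, x, y⟩ := mem_Nb.1 hq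
      rcases Finset.mem_insert.1 x with x | x
      · rw [← y]; exact hc e he x
      · rw [hN S hsub]; exact mem_Nb.2 ⟨e, he, x, y⟩
    have h3 := Finset.card_le_card h2
    omega
  · rintro ⟨hH, e, he, hea, hep⟩ S hS
    by_cases haS : a ∈ S
    · have hsub : S.erase a ⊆ A.erase a := Finset.erase_subset_erase _ hS
      have h1 := hH _ hsub
      have h2 := Finset.card_erase_add_one haS
      rw [hN _ hsub] at h1
      have h3 : Nb ae pe β (S.erase a) ⊆ Nb ae pe β S :=
        Nb_mono (Finset.Subset.refl _) (Finset.erase_subset _ _)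
      by_cases ht : (Nb ae pe β (S.erase a)).card = (S.erase a).card
      · have h4 : S.erase a ⊆ S0 ae pe (A.erase a) (β.filter fun e => ae e ≠ a) :=
          sub_S0 hsub (by rw [hN _ hsub, ht])
        have h5 : pe e ∉ Nb ae pe β (S.erase a) := by
          intro hh
          rw [← hN _ hsub] at hh
          exact hep (Nb_mono (Finset.Subset.refl _) h4 hh)
        have h6 : insert (pe e) (Nb ae pe β (S.erase a)) ⊆ Nb ae pe β S := by
          refine Finset.insert_subset (mem_Nb.2 ⟨e, he, ?_, rfl⟩) h3
          rw [hea]; exact haS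
        have h7 := Finset.card_le_card h6
        rw [Finset.card_insert_of_notMem h5] at h7
        omega
      · have h4 := Finset.card_le_card h3
        omega
    · have hsub : S ⊆ A.erase a := fun x hx => Finset.mem_erase.2 ⟨fun h => haS (h ▸ hx), hS hx⟩
      have := hH S hsub
      rwa [hN S hsub] at this

theorem SV.hall_step {A : Finset α} {a : α} (ha : a ∈ A)
    (h : ∀ E : Finset W, (∀ e ∈ E, ae e ∈ A.erase a) → ∀ p : Finset π,
      SV F E (fun β => Hall ae pe (A.erase a) β ∧ P0 ae pe (A.erase a) β = p) (2 * (A.erase a).card))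
    (E : Finset W) (hE : ∀ e ∈ E, ae e ∈ A) : SV F E (Hall ae pe A) (2 * A.card - 1) := by
  have hcard := Finset.card_erase_add_one ha
  refine SV.strat (fun β => OrderDual.toDual (P0 ae pe (A.erase a) (β.filter fun e => ae e ≠ a)))
    (Hall.convOn _ _) ?_ ?_
  · intro s t hst ht h1 h2
    rw [OrderDual.toDual_le_toDual]
    rw [hall_step_iff ha] at h1 h2
    exact (S0_anti (Finset.filter_subset_filter _ hst) h1.1 h2.1).2
  · refine fun (p : Finset π) => ?_
    refine SV.congr (P := fun β => (Hall ae pe (A.erase a) (β.filter fun e => ae e ≠ a) ∧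
      P0 ae pe (A.erase a) (β.filter fun e => ae e ≠ a) = p) ∧ ∃ e ∈ β, ae e = a ∧ pe e ∉ p) ?_ ?_
    swap
    · intro s hs
      rw [hall_step_iff ha]
      constructor
      · rintro ⟨⟨x, y⟩, rfl⟩; exact ⟨⟨x, rfl⟩, y⟩
      · rintro ⟨⟨x, rfl⟩, y⟩; exact ⟨⟨x, y⟩, rfl⟩
    by_cases hex : ∃ e ∈ E, ae e = a ∧ pe e ∈ p
    · obtain ⟨e, heE, hea, hep⟩ := hex
      refine SV.cone e heE ?_ _
      intro s hes hs
      have e1 : ((Finset.cons e s hes).filter fun e => ae e ≠ a) = s.filter fun e => ae e ≠ a := by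
        ext x; simp only [Finset.mem_filter, Finset.mem_cons]
        constructor
        · rintro ⟨rfl | h, h'⟩
          · exact absurd hea h'
          · exact ⟨h, h'⟩
        · tauto
      rw [e1]
      have e2 : (∃ e_1 ∈ Finset.cons e s hes, ae e_1 = a ∧ pe e_1 ∉ p) ↔
          ∃ e ∈ s, ae e = a ∧ pe e ∉ p := by
        constructor
        · rintro ⟨x, hx, y, z⟩
          rcases Finset.mem_cons.1 hx with rfl | hx
          · exact absurd hep z
          · exact ⟨x, hx, y, z⟩
        · rintro ⟨x, hx, y, z⟩; exact ⟨x, Finset.mem_cons_of_mem hx, y, z⟩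
      rw [e2]
    · push Not at hex
      refine SV.prod (E1 := E.filter fun e => ae e ≠ a) (E2 := E.filter fun e => ae e = a)
        (P1 := fun β => Hall ae pe (A.erase a) β ∧ P0 ae pe (A.erase a) β = p)
        (P2 := fun s => s ≠ ∅) (b1 := 2 * (A.erase a).card) (b2 := 1) ?_ ?_ ?_ ?_ ?_ (SV.nonempty _) ?_
      · intro x; simp only [Finset.mem_filter]; tauto
      · intro x; simp only [Finset.mem_filter]; tauto
      · have := (Hall.convOn (ae := ae) (pe := pe) (E.filter fun e => ae e ≠ a) (A.erase a)).fibre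
          (f := fun β => OrderDual.toDual (P0 ae pe (A.erase a) β)) (by
            intro s t hst ht h1 h2
            rw [OrderDual.toDual_le_toDual]
            exact (S0_anti hst h1 h2).2) (OrderDual.toDual p)
        exact this
      · intro s hs
        have e1 : rI s (E.filter fun e => ae e ≠ a) = s.filter fun e => ae e ≠ a := by
          ext x; simp only [Finset.mem_filter, mem_rI]; have := @hs x; tauto
        have e2 : (rI s (E.filter fun e => ae e = a) ≠ ∅) ↔ ∃ e ∈ s, ae e = a ∧ pe e ∉ p := by
          rw [← Finset.nonempty_iff_ne_empty]
          constructor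
          · rintro ⟨x, hx⟩
            simp only [Finset.mem_filter, mem_rI] at hx
            exact ⟨x, hx.1, hx.2.2, hex x hx.2.1 hx.2.2⟩
          · rintro ⟨x, hx, y, z⟩
            exact ⟨x, mem_rI.2 ⟨hx, Finset.mem_filter.2 ⟨hs hx, y⟩⟩⟩
        rw [e1, e2]
      · refine h _ ?_ p
        intro e he
        rw [Finset.mem_filter] at he
        exact Finset.mem_erase.2 ⟨he.2, hE e he.1⟩
      · omega

theorem SV.hall_all (N : ℕ) : ∀ A : Finset α, A.card = N → ∀ E : Finset W, (∀ e ∈ E, ae e ∈ A) →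
    SV F E (Hall ae pe A) (2 * A.card - 1) ∧ SV F E (PS ae pe A) (2 * A.card) ∧
    ∀ p : Finset π, SV F E (fun β => Hall ae pe A β ∧ P0 ae pe A β = p) (2 * A.card) := by
  induction N using Nat.strong_induction_on with
  | _ N ih =>
  intro A hA
  rcases A.eq_empty_or_nonempty with rfl | hne
  · intro E hE
    have hE0 : E = ∅ := by
      rw [Finset.eq_empty_iff_forall_notMem]; intro e he; simpa using hE e he
    subst hE0
    have hH : ∀ s : Finset W, Hall ae pe ∅ s := by
      intro s S hS; rw [Finset.subset_empty.1 hS]; simp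
    have hP : ∀ s : Finset W, P0 ae pe ∅ s = ∅ := by
      intro s
      have := S0_sub (ae := ae) (pe := pe) ∅ s
      rw [Finset.subset_empty] at this
      simp [P0, this, Nb]
    refine ⟨SV.base ?_, SV.base ?_, ?_⟩
    · intro s hs
      exact ⟨fun _ => Finset.subset_empty.1 hs, fun _ => hH s⟩
    · intro s hs
      refine ⟨fun _ => Finset.subset_empty.1 hs, fun _ => ?_⟩
      intro S hS hn
      rw [Finset.subset_empty.1 hS] at hn
      simp at hn
    · intro p
      by_cases hp : p = ∅
      · refine SV.base ?_
        intro s hs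
        exact ⟨fun _ => Finset.subset_empty.1 hs, fun _ => ⟨hH s, (hP s).trans hp.symm⟩⟩
      · exact SV.empty (fun s _ h => hp (by rw [← h.2]; exact hP s)) _
  · obtain ⟨a, ha⟩ := hne
    have hcard := Finset.card_erase_add_one ha
    have hall : ∀ E : Finset W, (∀ e ∈ E, ae e ∈ A) → SV F E (Hall ae pe A) (2 * A.card - 1) :=
      SV.hall_step ha fun E hE => (ih _ (by omega) (A.erase a) rfl E hE).2.2
    have hstr : ∀ E : Finset W, (∀ e ∈ E, ae e ∈ A) → ∀ S : Finset α, S.Nonempty → ∀ p : Finset π,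
        SV F E (fun β => Hall ae pe A β ∧ S0 ae pe A β = S ∧ P0 ae pe A β = p)
          (2 * A.card - 1) := by
      intro E hE S hn p
      by_cases hS : S ⊆ A
      swap
      · exact SV.empty (fun s _ h => hS (by rw [← h.2.1]; exact S0_sub A s)) _
      refine SV.stratum hS hn ?_ ?_ E hE p
      · by_cases hSA : S = A
        · rw [hSA]; exact hall
        · exact fun E hE => (ih S.card (by
            rw [← hA]; exact Finset.card_lt_card (hS.ssubset_of_ne hSA)) S rfl E hE).1
      · have a2 : (rI A S).card + (rD A S).card = A.card := Finset.card_filter_add_card_filter_not _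
        have a3 : rI A S = S := by
          ext x; rw [mem_rI]; exact ⟨fun h => h.2, fun h => ⟨hS h, h⟩⟩
        have hn' := hn.card_pos
        rw [a3] at a2
        exact fun E hE => (ih _ (by omega) (rD A S) rfl E hE).2.1
    intro E hE
    have hm1 : MonoOn E (Hall ae pe A) (fun β => OrderDual.toDual (S0 ae pe A β)) := by
      intro s t hst ht h1 h2
      rw [OrderDual.toDual_le_toDual]
      exact (S0_anti hst h1 h2).1
    have hm2 : MonoOn E (Hall ae pe A) (fun β => OrderDual.toDual (P0 ae pe A β)) := by
      intro s t hst ht h1 h2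
      rw [OrderDual.toDual_le_toDual]
      exact (S0_anti hst h1 h2).2
    have hps : SV F E (PS ae pe A) (2 * A.card) := by
      have hlow : SV F E (fun β => Hall ae pe A β ∧ ¬ (S0 ae pe A β = ∅)) (2 * A.card - 1) := by
        have hcv : ConvOn E (fun β => Hall ae pe A β ∧ ¬ (S0 ae pe A β = ∅)) := by
          rintro s t r hst htr hr ⟨h1, h2⟩ ⟨h3, h4⟩
          refine ⟨h1.mono hst, fun h => h4 ?_⟩
          have := (S0_anti htr (h1.mono hst) h3).1
          rw [h] at this
          exact Finset.subset_empty.1 this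
        refine SV.strat (fun β => (OrderDual.toDual (S0 ae pe A β), OrderDual.toDual (P0 ae pe A β)))
          hcv ?_ ?_
        · intro s t hst ht h1 h2
          exact ⟨hm1 s t hst ht h1.1 h2.1, hm2 s t hst ht h1.1 h2.1⟩
        · rintro ⟨S', p'⟩
          by_cases hn : (OrderDual.ofDual S').Nonempty
          · refine (hstr E hE _ hn (OrderDual.ofDual p')).congr fun s hs => ?_
            constructor
            · rintro ⟨h, h'⟩
              rw [Prod.mk.injEq] at h'
              exact ⟨h.1, h'.1, h'.2⟩
            · rintro ⟨h1, h2, h3⟩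
              refine ⟨⟨h1, fun h => hn.ne_empty (h2.symm.trans h)⟩, ?_⟩
              rw [Prod.mk.injEq]
              exact ⟨h2, h3⟩
          · refine SV.empty ?_ _
            rintro s hs ⟨h, h'⟩
            rw [Prod.mk.injEq] at h'
            exact h.2 (h'.1.trans (Finset.not_nonempty_iff_eq_empty.1 hn))
      obtain ⟨b, hb⟩ : ∃ b, 2 * A.card = b + 1 := ⟨2 * A.card - 1, by omega⟩
      have hlow' := hlow.mono (show 2 * A.card - 1 ≤ b by omega)
      rw [hb]
      refine (SV.upper (Hall.convOn E A) (fun β => S0 ae pe A β = ∅) ?_ ((hall E hE).mono (by omega))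
        hlow').congr fun s hs => PS_iff
      intro s t hst ht h1 h2 h3
      have := (S0_anti hst h1 h2).1
      rw [h3] at this
      exact Finset.subset_empty.1 this
    refine ⟨hall E hE, hps, ?_⟩
    intro p
    have hcv : ConvOn E (fun β => Hall ae pe A β ∧ P0 ae pe A β = p) := by
      exact
        (Hall.convOn E A).fibre hm2 (OrderDual.toDual p)
    refine SV.strat (fun β => OrderDual.toDual (S0 ae pe A β)) hcv ?_ ?_
    · intro s t hst ht h1 h2
      exact hm1 s t hst ht h1.1 h2.1
    · intro S'
      by_cases hn : (OrderDual.ofDual S').Nonempty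
      · refine ((hstr E hE _ hn p).mono (by omega)).congr fun s hs => ?_
        constructor
        · rintro ⟨⟨h1, h2⟩, h3⟩; exact ⟨h1, h3, h2⟩
        · rintro ⟨h1, h2, h3⟩; exact ⟨⟨h1, h3⟩, h2⟩
      · have hS' : S' = OrderDual.toDual ∅ := Finset.not_nonempty_iff_eq_empty.1 hn
        by_cases hp : p = ∅
        · refine hps.congr fun s hs => ?_
          rw [PS_iff]
          constructor
          · rintro ⟨⟨h1, h2⟩, h3⟩; exact ⟨h1, h3.trans hS'⟩
          · rintro ⟨h1, h2⟩
            refine ⟨⟨h1, ?_⟩, ?_⟩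
            · simp [P0, h2, Nb, hp]
            · rw [h2, hS']
        · refine SV.empty ?_ _
          rintro s hs ⟨⟨h1, h2⟩, h3⟩
          have h4 : S0 ae pe A s = ∅ := h3.trans hS'
          apply hp
          rw [← h2]
          simp [P0, h4, Nb]

theorem SV.ps (A : Finset α) (E : Finset W) (hE : ∀ e ∈ E, ae e ∈ A) :
    SV F E (PS ae pe A) (2 * A.card) := (SV.hall_all _ A rfl E hE).2.1

end hall


/-! ### Matchings -/
section matchings
variable {V : Type}

/-- covered vertices -/
def cv (M : Finset (Sym2 V)) : Set V := {v | ∃ e ∈ M, v ∈ e}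

theorem mem_cv {M : Finset (Sym2 V)} {v : V} : v ∈ cv M ↔ ∃ e ∈ M, v ∈ e := Iff.rfl

theorem cv_mono {M N : Finset (Sym2 V)} (h : M ⊆ N) : cv M ⊆ cv N := by
  rintro v ⟨e, he, hv⟩; exact ⟨e, h he, hv⟩

theorem IsMatching.sub {M N : Finset (Sym2 V)} (h : IsMatching N) (hs : M ⊆ N) : IsMatching M :=
  ⟨fun e he => h.1 e (hs he), fun e he f hf => h.2 e (hs he) f (hs hf)⟩

theorem IsMatching.cv_erase {M : Finset (Sym2 V)} (h : IsMatching M) {e : Sym2 V} (he : e ∈ M)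
    (v : V) : v ∈ cv (M.erase e) ↔ v ∈ cv M ∧ v ∉ e := by
  constructor
  · rintro ⟨f, hf, hv⟩
    rw [Finset.mem_erase] at hf
    exact ⟨⟨f, hf.2, hv⟩, fun h' => h.2 e he f hf.2 (Ne.symm hf.1) v h' hv⟩
  · rintro ⟨⟨f, hf, hv⟩, h'⟩
    exact ⟨f, Finset.mem_erase.2 ⟨fun hh => h' (hh ▸ hv), hf⟩, hv⟩

theorem cv_insert (M : Finset (Sym2 V)) (e : Sym2 V) (v : V) :
    v ∈ cv (insert e M) ↔ v ∈ e ∨ v ∈ cv M := by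
  simp [cv]

theorem IsMatching.insert {M : Finset (Sym2 V)} (h : IsMatching M) {e : Sym2 V} (he : ¬ e.IsDiag)
    (hd : ∀ v ∈ e, v ∉ cv M) : IsMatching (insert e M) := by
  refine ⟨?_, ?_⟩
  · intro f hf
    rcases Finset.mem_insert.1 hf with rfl | hf
    · exact he
    · exact h.1 f hf
  · intro f hf g hg hne v hvf hvg
    rcases Finset.mem_insert.1 hf with h1 | h1
    · rcases Finset.mem_insert.1 hg with h2 | h2
      · exact hne (h1.trans h2.symm)
      · exact hd v (h1 ▸ hvf) ⟨g, h2, hvg⟩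
    · rcases Finset.mem_insert.1 hg with h2 | h2
      · exact hd v (h2 ▸ hvg) ⟨f, h1, hvf⟩
      · exact h.2 f h1 g h2 hne v hvf hvg

theorem card_insert_cv {M : Finset (Sym2 V)} {x z : V}
    (hd : x ∉ cv M) : (insert s(x, z) M).card = M.card + 1 := by
  apply Finset.card_insert_of_notMem
  intro h
  exact hd ⟨_, h, Sym2.mem_mk_left x z⟩

theorem exists_other {M : Finset (Sym2 V)} (h : IsMatching M) {x : V} (hx : x ∈ cv M) :
    ∃ z, x ≠ z ∧ s(x, z) ∈ M := by
  obtain ⟨e, he, hv⟩ := hx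
  obtain ⟨z, rfl⟩ := Sym2.mem_iff_exists.1 hv
  refine ⟨z, ?_, he⟩
  have := h.1 _ he
  rwa [Sym2.mk_isDiag_iff] at this

set_option maxHeartbeats 1600000 in
theorem exchange (R : V → V → Prop) (hR : Equivalence R) (n : ℕ) :
    ∀ (M M' : Finset (Sym2 V)) (x : V), M'.card = n → IsMatching M → IsMatching M' → x ∈ cv M →
      x ∉ cv M' → (∀ u v, s(u, v) ∈ M → R u v) → (∀ u v, s(u, v) ∈ M' → R u v) →
    ∃ y M1 M1', y ≠ x ∧ IsMatching M1 ∧ IsMatching M1' ∧ M1 ⊆ M ∪ M' ∧ M1' ⊆ M ∪ M' ∧ R x y ∧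
      ((y ∈ cv M' ∧ y ∉ cv M ∧ M1.card = M.card ∧ M1'.card = M'.card ∧
          (∀ v, v ∈ cv M1 ↔ (v ∈ cv M ∧ v ≠ x) ∨ v = y) ∧
          (∀ v, v ∈ cv M1' ↔ (v ∈ cv M' ∧ v ≠ y) ∨ v = x)) ∨
       (y ∈ cv M ∧ y ∉ cv M' ∧ M1.card + 1 = M.card ∧ M1'.card = M'.card + 1 ∧
          (∀ v, v ∈ cv M1 ↔ (v ∈ cv M ∧ v ≠ x ∧ v ≠ y)) ∧
          (∀ v, v ∈ cv M1' ↔ v ∈ cv M' ∨ v = x ∨ v = y))) := by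
  induction n with
  | zero =>
    intro M M' x hc hM hM' hx hx' hr hr'
    obtain ⟨z, hxz, he⟩ := exists_other hM hx
    rw [Finset.card_eq_zero] at hc
    subst hc
    have hz' : z ∉ cv (∅ : Finset (Sym2 V)) := by simp [cv]
    have hd : ∀ v ∈ s(x, z), v ∉ cv (∅ : Finset (Sym2 V)) := by
      intro v hv; simp [cv]
    refine ⟨z, M.erase s(x, z), insert s(x, z) ∅, hxz.symm, hM.sub (Finset.erase_subset _ _),
      hM'.insert (hM.1 _ he) hd, ?_, ?_, hr _ _ he, Or.inr ⟨⟨_, he, Sym2.mem_mk_right x z⟩, hz', ?_,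
        card_insert_cv hx', ?_, ?_⟩⟩
    · exact (Finset.erase_subset _ _).trans Finset.subset_union_left
    · refine Finset.insert_subset (Finset.mem_union_left _ he) Finset.subset_union_right
    · exact Finset.card_erase_add_one he
    · intro v; rw [hM.cv_erase he, Sym2.mem_iff]; tauto
    · intro v; rw [cv_insert, Sym2.mem_iff]; tauto
  | succ n ih =>
    intro M M' x hc hM hM' hx hx' hr hr'
    obtain ⟨z, hxz, he⟩ := exists_other hM hx
    have hzM : z ∈ cv M := ⟨_, he, Sym2.mem_mk_right x z⟩
    by_cases hz' : z ∈ cv M'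
    swap
    · have hd : ∀ v ∈ s(x, z), v ∉ cv M' := by
        intro v hv
        rcases Sym2.mem_iff.1 hv with rfl | rfl
        · exact hx'
        · exact hz'
      refine ⟨z, M.erase s(x, z), insert s(x, z) M', hxz.symm, hM.sub (Finset.erase_subset _ _),
        hM'.insert (hM.1 _ he) hd, ?_, ?_, hr _ _ he, Or.inr ⟨hzM, hz', ?_, card_insert_cv hx', ?_, ?_⟩⟩
      · exact (Finset.erase_subset _ _).trans Finset.subset_union_left
      · refine Finset.insert_subset (Finset.mem_union_left _ he) Finset.subset_union_right
      · exact Finset.card_erase_add_one he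
      · intro v; rw [hM.cv_erase he, Sym2.mem_iff]; tauto
      · intro v; rw [cv_insert, Sym2.mem_iff]; tauto
    · obtain ⟨w, hzw, hf⟩ := exists_other hM' hz'
      have hwM' : w ∈ cv M' := ⟨_, hf, Sym2.mem_mk_right z w⟩
      have hwx : w ≠ x := fun h => hx' (h ▸ hwM')
      have cN : ∀ v, v ∈ cv (M.erase s(x, z)) ↔ v ∈ cv M ∧ v ≠ x ∧ v ≠ z := by
        intro v; rw [hM.cv_erase he, Sym2.mem_iff]; tauto
      have cN' : ∀ v, v ∈ cv (M'.erase s(z, w)) ↔ v ∈ cv M' ∧ v ≠ z ∧ v ≠ w := by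
        intro v; rw [hM'.cv_erase hf, Sym2.mem_iff]; tauto
      have hN : IsMatching (M.erase s(x, z)) := hM.sub (Finset.erase_subset _ _)
      have hN' : IsMatching (M'.erase s(z, w)) := hM'.sub (Finset.erase_subset _ _)
      have kN := Finset.card_erase_add_one he
      have kN' := Finset.card_erase_add_one hf
      have hne := hM.1 _ he
      have hnf := hM'.1 _ hf
      have hRx : R x w := hR.trans (hr _ _ he) (hr' _ _ hf)
      by_cases hwM : w ∈ cv M
      swap
      · refine ⟨w, insert s(z, w) (M.erase s(x, z)), insert s(x, z) (M'.erase s(z, w)), hwx,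
          hN.insert hnf ?_, hN'.insert hne ?_, ?_, ?_, hRx, Or.inl ⟨hwM', hwM, ?_, ?_, ?_, ?_⟩⟩
        · intro v hv
          rw [cN]
          rcases Sym2.mem_iff.1 hv with rfl | rfl <;> tauto
        · intro v hv
          rw [cN']
          rcases Sym2.mem_iff.1 hv with rfl | rfl <;> tauto
        · exact Finset.insert_subset (Finset.mem_union_right _ hf)
            ((Finset.erase_subset _ _).trans Finset.subset_union_left)
        · exact Finset.insert_subset (Finset.mem_union_left _ he)
            ((Finset.erase_subset _ _).trans Finset.subset_union_right)
        · rw [card_insert_cv (by rw [cN]; tauto)]; exact kN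
        · rw [card_insert_cv (by rw [cN']; tauto)]; exact kN'
        · intro v; rw [cv_insert, cN, Sym2.mem_iff]
          by_cases h1 : v = z
          · subst h1; tauto
          · tauto
        · intro v; rw [cv_insert, cN', Sym2.mem_iff]
          by_cases h1 : v = z
          · subst h1; tauto
          · tauto
      · obtain ⟨y, N1, N1', hyw, m1, m1', s1, s1', hRy, hcase⟩ :=
          ih (M.erase s(x, z)) (M'.erase s(z, w)) w (by omega) hN hN'
            (by rw [cN]; exact ⟨hwM, hwx, Ne.symm hzw⟩) (by rw [cN']; tauto)
            (fun u v h => hr u v (Finset.mem_of_mem_erase h))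
            (fun u v h => hr' u v (Finset.mem_of_mem_erase h))
        have hsub : M.erase s(x, z) ∪ M'.erase s(z, w) ⊆ M ∪ M' :=
          Finset.union_subset_union (Finset.erase_subset _ _) (Finset.erase_subset _ _)
        refine ⟨y, insert s(z, w) N1, insert s(x, z) N1', ?_⟩
        simp only [cN, cN'] at hcase
        have c1 : ∀ v, v ∈ cv (insert s(z, w) N1) ↔ (v = z ∨ v = w) ∨ v ∈ cv N1 := by
          intro v; rw [cv_insert, Sym2.mem_iff]
        have c1' : ∀ v, v ∈ cv (insert s(x, z) N1') ↔ (v = x ∨ v = z) ∨ v ∈ cv N1' := by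
          intro v; rw [cv_insert, Sym2.mem_iff]
        have hyx : y ≠ x := by
          rintro rfl
          rcases hcase with h | h
          · exact hx' h.1.1
          · exact h.1.2.1 rfl
        have hzN1 : z ∉ cv N1 := by
          rcases hcase with h | h
          · rw [h.2.2.2.2.1]; rintro (h' | h')
            · exact h'.1.2.2 rfl
            · exact h.1.2.1 h'.symm
          · rw [h.2.2.2.2.1]; tauto
        have hwN1 : w ∉ cv N1 := by
          rcases hcase with h | h
          · rw [h.2.2.2.2.1]; rintro (h' | h')
            · exact h'.2 rfl
            · exact hyw h'.symm
          · rw [h.2.2.2.2.1]; tauto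
        have hxN1' : x ∉ cv N1' := by
          rcases hcase with h | h
          · rw [h.2.2.2.2.2]; rintro (h' | h')
            · exact hx' h'.1.1
            · exact hwx h'.symm
          · rw [h.2.2.2.2.2]; rintro (h' | h' | h')
            · exact hx' h'.1
            · exact hwx h'.symm
            · exact hyx h'.symm
        have hzN1' : z ∉ cv N1' := by
          rcases hcase with h | h
          · rw [h.2.2.2.2.2]; rintro (h' | h')
            · exact h'.1.2.1 rfl
            · exact hzw h'
          · rw [h.2.2.2.2.2]; rintro (h' | h' | h')
            · exact h'.2.1 rfl
            · exact hzw h'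
            · exact h.1.2.2 h'.symm
        have k1 := card_insert_cv (z := w) hzN1
        have k1' := card_insert_cv (z := z) hxN1'
        refine ⟨hyx, m1.insert hnf ?_, m1'.insert hne ?_, ?_, ?_, hR.trans hRx hRy, ?_⟩
        · intro v hv
          rcases Sym2.mem_iff.1 hv with rfl | rfl
          · exact hzN1
          · exact hwN1
        · intro v hv
          rcases Sym2.mem_iff.1 hv with rfl | rfl
          · exact hxN1'
          · exact hzN1'
        · exact Finset.insert_subset (Finset.mem_union_right _ hf) (s1.trans hsub)
        · exact Finset.insert_subset (Finset.mem_union_left _ he) (s1'.trans hsub)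
        · rcases hcase with ⟨a1, a2, a3, a4, a5, a6⟩ | ⟨a1, a2, a3, a4, a5, a6⟩
          · left
            refine ⟨a1.1, ?_, by omega, by omega, ?_, ?_⟩
            · intro h; exact a2 ⟨h, hyx, a1.2.1⟩
            · intro v; rw [c1, a5]
              by_cases h1 : v = z
              · subst h1; tauto
              · by_cases h2 : v = w
                · subst h2; tauto
                · tauto
            · intro v; rw [c1', a6]
              by_cases h1 : v = z
              · subst h1; have := Ne.symm a1.2.1; tauto
              · by_cases h2 : v = w
                · subst h2; have := Ne.symm hyw; tauto
                · tauto
          · right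
            refine ⟨a1.1, ?_, by omega, by omega, ?_, ?_⟩
            · intro h; exact a2 ⟨h, a1.2.2, hyw⟩
            · intro v; rw [c1, a5]
              by_cases h1 : v = z
              · subst h1; have := Ne.symm a1.2.2; have := Ne.symm hxz; tauto
              · by_cases h2 : v = w
                · subst h2; have := Ne.symm hyw; tauto
                · tauto
            · intro v; rw [c1', a6]
              by_cases h1 : v = z
              · subst h1; tauto
              · by_cases h2 : v = w
                · subst h2; tauto
                · tauto

end matchings


section missable
variable {V : Type}

/-- maximum matchings -/
def MM (s M : Finset (Sym2 V)) : Prop := M ⊆ s ∧ IsMatching M ∧ M.card = nu s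

/-- missable vertices -/
def Dm (s : Finset (Sym2 V)) : Set V := {v | ∃ M, MM s M ∧ v ∉ cv M}

/-- no maximum matching misses both -/
def sim (s : Finset (Sym2 V)) (x y : V) : Prop := x = y ∨ ∀ M, MM s M → x ∈ cv M ∨ y ∈ cv M

theorem nu_le {s M : Finset (Sym2 V)} (h : M ⊆ s) (hM : IsMatching M) : M.card ≤ nu s := by
  unfold nu
  exact Finset.le_sup (f := Finset.card) (Finset.mem_filter.2 ⟨Finset.mem_powerset.2 h, hM⟩)

theorem isMatching_empty : IsMatching (∅ : Finset (Sym2 V)) := by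
  constructor <;> simp

theorem exists_MM (s : Finset (Sym2 V)) : ∃ M, MM s M := by
  have hne : (s.powerset.filter fun M => IsMatching M).Nonempty :=
    ⟨∅, Finset.mem_filter.2 ⟨Finset.empty_mem_powerset s, isMatching_empty⟩⟩
  obtain ⟨M, hM, h⟩ := Finset.exists_mem_eq_sup _ hne Finset.card
  rw [Finset.mem_filter, Finset.mem_powerset] at hM
  exact ⟨M, hM.1, hM.2, h.symm⟩

theorem nu_mono {s t : Finset (Sym2 V)} (h : s ⊆ t) : nu s ≤ nu t := by
  obtain ⟨M, h1, h2, h3⟩ := exists_MM s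
  rw [← h3]; exact nu_le (h1.trans h) h2

theorem nu_empty : nu (∅ : Finset (Sym2 V)) = 0 := by
  obtain ⟨M, h1, h2, h3⟩ := exists_MM (∅ : Finset (Sym2 V))
  rw [← h3, Finset.subset_empty.1 h1]; rfl

theorem MM.mono {s t M : Finset (Sym2 V)} (h : MM s M) (hs : s ⊆ t) (hn : nu s = nu t) :
    MM t M := ⟨h.1.trans hs, h.2.1, h.2.2.trans hn⟩

theorem MM.of_le {s M : Finset (Sym2 V)} (h : M ⊆ s) (hM : IsMatching M) (hc : nu s ≤ M.card) :
    MM s M := ⟨h, hM, le_antisymm (nu_le h hM) hc⟩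

theorem Dm_mono {s t : Finset (Sym2 V)} (hs : s ⊆ t) (hn : nu s = nu t) : Dm s ⊆ Dm t := by
  rintro v ⟨M, h, hv⟩; exact ⟨M, h.mono hs hn, hv⟩

theorem sim_anti {s t : Finset (Sym2 V)} (hs : s ⊆ t) (hn : nu s = nu t) {x y : V}
    (h : sim t x y) : sim s x y := by
  rcases h with h | h
  · exact Or.inl h
  · exact Or.inr fun M hM => h M (hM.mono hs hn)

theorem sim_symm {s : Finset (Sym2 V)} {x y : V} (h : sim s x y) : sim s y x := by
  rcases h with h | h
  · exact Or.inl h.symm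
  · exact Or.inr fun M hM => (h M hM).symm

theorem eqv_true : Equivalence (fun _ _ : V => True) :=
  ⟨fun _ => trivial, fun _ => trivial, fun _ _ => trivial⟩

/-- exchange between two maximum matchings -/
theorem exchange_max (R : V → V → Prop) (hR : Equivalence R) {s M M' : Finset (Sym2 V)}
    (hM : MM s M) (hM' : MM s M') (hr : ∀ u v, s(u, v) ∈ s → u ≠ v → R u v) {x : V} (hx : x ∈ cv M)
    (hx' : x ∉ cv M') : ∃ y M1, R x y ∧ y ∈ cv M' ∧ y ∉ cv M ∧ y ≠ x ∧ MM s M1 ∧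
      (∀ v, v ∈ cv M1 ↔ (v ∈ cv M ∧ v ≠ x) ∨ v = y) := by
  have hne : ∀ N, MM s N → ∀ u v, s(u, v) ∈ N → R u v := by
    intro N hN u v h
    refine hr u v (hN.1 h) ?_
    have := hN.2.1.1 _ h
    rwa [Sym2.mk_isDiag_iff] at this
  obtain ⟨y, M1, M1', hyx, m1, m1', s1, s1', hRy, hc⟩ := exchange R hR _ M M' x rfl hM.2.1 hM'.2.1 hx hx'
    (hne M hM) (hne M' hM')
  have hs := Finset.union_subset hM.1 hM'.1
  rcases hc with h | h
  · exact ⟨y, M1, hRy, h.1, h.2.1, hyx, ⟨s1.trans hs, m1, h.2.2.1.trans hM.2.2⟩, h.2.2.2.2.1⟩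
  · exfalso
    have h1 := nu_le (s1'.trans hs) m1'
    have h2 := hM'.2.2
    omega

theorem gallai {s : Finset (Sym2 V)} {u w v : V} (h1 : sim s u w) (h2 : sim s w v) (hw : w ∈ Dm s) :
    sim s u v := by
  rcases h1 with rfl | h1
  · exact h2
  rcases h2 with rfl | h2
  · exact Or.inr h1
  by_cases huv : u = v
  · exact Or.inl huv
  refine Or.inr fun M hM => ?_
  by_contra hc
  push Not at hc
  obtain ⟨M', hM', hw'⟩ := hw
  have hwM : w ∈ cv M := (h1 M hM).resolve_left hc.1
  obtain ⟨y, M1, -, hy1, hy2, hyw, hM1, hcv⟩ := exchange_max _ eqv_true hM hM'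
    (fun _ _ _ _ => trivial) hwM hw'
  have hw1 : w ∉ cv M1 := by
    rw [hcv]; rintro (h | h)
    · exact h.2 rfl
    · exact hyw h.symm
  have a1 := (h1 M1 hM1).resolve_right hw1
  have a2 := (h2 M1 hM1).resolve_left hw1
  rw [hcv] at a1 a2
  have b1 : u = y := by tauto
  have b2 : v = y := by tauto
  exact huv (b1.trans b2.symm)

theorem sim_of_edge {s : Finset (Sym2 V)} {x y : V} (h : s(x, y) ∈ s) (hne : x ≠ y) : sim s x y := by
  refine Or.inr fun M hM => ?_
  by_contra hc
  push Not at hc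
  have h1 := hM.2.1.insert (e := s(x, y)) (by rwa [Sym2.mk_isDiag_iff]) (by
    intro v hv
    rcases Sym2.mem_iff.1 hv with rfl | rfl
    · exact hc.1
    · exact hc.2)
  have h2 := nu_le (Finset.insert_subset h hM.1) h1
  rw [card_insert_cv hc.1] at h2
  have := hM.2.2
  omega

theorem sim_equiv {s : Finset (Sym2 V)} (h : ∀ v, v ∈ Dm s) : Equivalence (sim s) :=
  ⟨fun _ => Or.inl rfl, sim_symm, fun {_ w _} h1 h2 => gallai h1 h2 (h w)⟩

theorem swap_in {s M : Finset (Sym2 V)} (h : ∀ v, v ∈ Dm s) (hM : MM s M) {x : V} (hx : x ∈ cv M) :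
    ∃ y M1, sim s x y ∧ y ∉ cv M ∧ y ≠ x ∧ MM s M1 ∧
      (∀ v, v ∈ cv M1 ↔ (v ∈ cv M ∧ v ≠ x) ∨ v = y) := by
  obtain ⟨M', hM', hx'⟩ := h x
  obtain ⟨y, M1, a, _, c, d, e, f⟩ := exchange_max _ (sim_equiv h) hM hM'
    (fun u v => sim_of_edge) hx hx'
  exact ⟨y, M1, a, c, d, e, f⟩

theorem transversal {s : Finset (Sym2 V)} (h : ∀ v, v ∈ Dm s) (T : Finset V)
    (hT : ∀ x ∈ T, ∀ y ∈ T, x ≠ y → ¬ sim s x y) : ∃ M, MM s M ∧ ∀ x ∈ T, x ∉ cv M := by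
  induction T using Finset.induction_on with
  | empty =>
    obtain ⟨M, hM⟩ := exists_MM s
    exact ⟨M, hM, by simp⟩
  | insert a T ha ih =>
    obtain ⟨M, hM, hMT⟩ := ih fun x hx y hy =>
      hT x (Finset.mem_insert_of_mem hx) y (Finset.mem_insert_of_mem hy)
    by_cases haM : a ∈ cv M
    swap
    · refine ⟨M, hM, ?_⟩
      intro x hx
      rcases Finset.mem_insert.1 hx with rfl | hx
      · exact haM
      · exact hMT x hx
    · obtain ⟨y, M1, hay, hyM, hya, hM1, hcv⟩ := swap_in h hM haM
      refine ⟨M1, hM1, ?_⟩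
      intro x hx
      rw [hcv]
      rcases Finset.mem_insert.1 hx with rfl | hx
      · rintro (h' | h')
        · exact h'.2 rfl
        · exact hya h'.symm
      · rintro (h' | h')
        · exact hMT x hx h'.1
        · subst h'
          exact hT a (Finset.mem_insert_self _ _) x (Finset.mem_insert_of_mem hx)
            (Ne.symm hya) hay

theorem sim_const {s t : Finset (Sym2 V)} (hs : s ⊆ t) (hn : nu s = nu t) (h : ∀ v, v ∈ Dm s)
    (x y : V) : sim s x y ↔ sim t x y := by
  refine ⟨fun hxy => ?_, sim_anti hs hn⟩
  have h' : ∀ v, v ∈ Dm t := fun v => Dm_mono hs hn (h v)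
  obtain ⟨M, hM⟩ := exists_MM s
  have key : ∀ x, ∃ u, u ∉ cv M ∧ sim t x u := by
    intro x
    by_cases hx : x ∈ cv M
    · obtain ⟨y, M1, a, b, _⟩ := swap_in h' (hM.mono hs hn) hx
      exact ⟨y, b, a⟩
    · exact ⟨x, hx, Or.inl rfl⟩
  obtain ⟨u, hu, hxu⟩ := key x
  obtain ⟨w, hw, hyw⟩ := key y
  have h1 : sim s u w := (sim_equiv h).trans (sim_symm (sim_anti hs hn hxu))
    ((sim_equiv h).trans hxy (sim_anti hs hn hyw))
  have h2 : u = w := by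
    rcases h1 with h1 | h1
    · exact h1
    · exfalso; have := h1 M hM; tauto
  subst h2
  exact (sim_equiv h').trans hxu (sim_symm hyw)

/-- induced edge set -/
noncomputable def ind (s : Finset (Sym2 V)) (X : Set V) : Finset (Sym2 V) :=
  s.filter fun e => ∀ v ∈ e, v ∈ X

theorem mem_ind {s : Finset (Sym2 V)} {X : Set V} {e : Sym2 V} :
    e ∈ ind s X ↔ e ∈ s ∧ ∀ v ∈ e, v ∈ X := by simp [ind]

theorem ind_sub (s : Finset (Sym2 V)) (X : Set V) : ind s X ⊆ s := Finset.filter_subset _ _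

theorem ind_mono {s t : Finset (Sym2 V)} (h : s ⊆ t) (X : Set V) : ind s X ⊆ ind t X :=
  Finset.filter_subset_filter _ h

theorem cv_ind {s : Finset (Sym2 V)} {X : Set V} {v : V} (h : v ∈ cv (ind s X)) : v ∈ X := by
  obtain ⟨e, he, hv⟩ := h
  exact (mem_ind.1 he).2 v hv

/-- a matching avoiding `u` -/
theorem sub_ind {s M : Finset (Sym2 V)} (h : M ⊆ s) {X : Set V} (hX : cv M ⊆ X) : M ⊆ ind s X :=
  fun e he => mem_ind.2 ⟨h he, fun v hv => hX ⟨e, he, hv⟩⟩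

/-- removing the edge at `u` -/
theorem MM.erase_at {s M : Finset (Sym2 V)} (hM : MM s M) {u : V} (hu : u ∈ cv M) :
    ∃ w N, u ≠ w ∧ s(u, w) ∈ M ∧ N ⊆ ind s {u}ᶜ ∧ IsMatching N ∧ N.card + 1 = nu s ∧
      ∀ v, v ∈ cv N ↔ v ∈ cv M ∧ v ≠ u ∧ v ≠ w := by
  obtain ⟨w, huw, he⟩ := exists_other hM.2.1 hu
  have hcv : ∀ v, v ∈ cv (M.erase s(u, w)) ↔ v ∈ cv M ∧ v ≠ u ∧ v ≠ w := by
    intro v; rw [hM.2.1.cv_erase he, Sym2.mem_iff]; tauto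
  refine ⟨w, M.erase s(u, w), huw, he, ?_, hM.2.1.sub (Finset.erase_subset _ _), ?_, hcv⟩
  · refine sub_ind ((Finset.erase_subset _ _).trans hM.1) ?_
    intro v hv
    rw [hcv] at hv
    exact hv.2.1
  · rw [Finset.card_erase_add_one he]; exact hM.2.2

theorem add_edge {s M : Finset (Sym2 V)} (h : M ⊆ s) (hM : IsMatching M) {x y : V}
    (he : s(x, y) ∈ s) (hxy : x ≠ y) (hx : x ∉ cv M) (hy : y ∉ cv M) :
    insert s(x, y) M ⊆ s ∧ IsMatching (insert s(x, y) M) ∧ (insert s(x, y) M).card = M.card + 1 ∧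
      ∀ v, v ∈ cv (insert s(x, y) M) ↔ v = x ∨ v = y ∨ v ∈ cv M := by
  refine ⟨Finset.insert_subset he h, hM.insert (by rwa [Sym2.mk_isDiag_iff]) ?_, card_insert_cv hx, ?_⟩
  · intro v hv
    rcases Sym2.mem_iff.1 hv with rfl | rfl
    · exact hx
    · exact hy
  · intro v; rw [cv_insert, Sym2.mem_iff]; tauto

theorem stability {s : Finset (Sym2 V)} {u d : V} (hu : u ∉ Dm s) (hd : d ∈ Dm s)
    (he : s(u, d) ∈ s) : nu (ind s {u}ᶜ) + 1 = nu s ∧ Dm (ind s {u}ᶜ) = Dm s ∪ {u} := by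
  have hud : u ≠ d := fun h => hu (h ▸ hd)
  have hucov : ∀ M, MM s M → u ∈ cv M := fun M hM => by_contra fun h => hu ⟨M, hM, h⟩
  have huind : ∀ M, M ⊆ ind s {u}ᶜ → u ∉ cv M := fun M hM h =>
    (cv_ind (cv_mono hM h)) rfl
  have hnu : nu (ind s {u}ᶜ) + 1 = nu s := by
    obtain ⟨M, hM⟩ := exists_MM s
    obtain ⟨w, N, _, _, hN1, hN2, hN3, _⟩ := hM.erase_at (hucov M hM)
    have h1 := nu_le hN1 hN2
    obtain ⟨K, hK⟩ := exists_MM (ind s {u}ᶜ)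
    have h2 : nu (ind s {u}ᶜ) ≤ nu s := nu_mono (ind_sub _ _)
    have h3 : nu (ind s {u}ᶜ) ≠ nu s := fun h => huind K hK.1 (hucov K (hK.mono (ind_sub _ _) h))
    omega
  refine ⟨hnu, Set.Subset.antisymm ?_ ?_⟩
  · rintro v ⟨M, hM, hv⟩
    by_cases hvu : v = u
    · exact Or.inr hvu
    left
    have huM := huind M hM.1
    have hMs := hM.1.trans (ind_sub _ _)
    have addd : ∀ N, N ⊆ s → IsMatching N → N.card + 1 = nu s → u ∉ cv N → d ∉ cv N → v ∉ cv N →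
        v ∈ Dm s := by
      intro N h1 h2 h3 h4 h5 h6
      by_cases hvd : v = d
      · rw [hvd]; exact hd
      · obtain ⟨a, b, c, e⟩ := add_edge h1 h2 he hud h4 h5
        refine ⟨_, ⟨a, b, by omega⟩, ?_⟩
        rw [e]; tauto
    have hMc := hM.2.2
    by_cases hdM : d ∈ cv M
    swap
    · exact addd M hMs hM.2.1 (by omega) huM hdM hv
    · obtain ⟨M', hM', hd'⟩ := hd
      obtain ⟨y, M1, M1', hyd, m1, m1', s1, s1', -, hc⟩ := exchange _ eqv_true _ M M' d rfl
        hM.2.1 hM'.2.1 hdM hd' (fun _ _ _ => trivial) (fun _ _ _ => trivial)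
      have hs := Finset.union_subset hMs hM'.1
      have hMc' := hM'.2.2
      rcases hc with ⟨a1, a2, a3, a4, a5, a6⟩ | ⟨a1, a2, a3, a4, a5, a6⟩
      · have hmm : MM s M1' := ⟨s1'.trans hs, m1', by omega⟩
        have hvd : v ≠ d := fun h => hv (h ▸ hdM)
        have hyM1' : y ∉ cv M1' := by
          rw [a6]; tauto
        by_cases hyv : y = v
        · exact ⟨M1', hmm, hyv ▸ hyM1'⟩
        have hyu : y ≠ u := fun h => hyM1' (h ▸ hucov M1' hmm)
        refine addd M1 (s1.trans hs) m1 (by omega) ?_ ?_ ?_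
        · rw [a5]; rintro (h | h)
          · exact huM h.1
          · exact hyu h.symm
        · rw [a5]; rintro (h | h)
          · exact h.2 rfl
          · exact hyd h.symm
        · rw [a5]; rintro (h | h)
          · exact hv h.1
          · exact hyv h.symm
      · exfalso
        have := nu_le (s1'.trans hs) m1'
        omega
  · rintro v (⟨M, hM, hv⟩ | hv)
    · obtain ⟨w, N, _, _, hN1, hN2, hN3, hN4⟩ := hM.erase_at (hucov M hM)
      refine ⟨N, ⟨hN1, hN2, by omega⟩, ?_⟩
      rw [hN4]; tauto
    · rw [Set.mem_singleton_iff] at hv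
      subst hv
      obtain ⟨K, hK⟩ := exists_MM (ind s {v}ᶜ)
      exact ⟨K, hK, huind K hK.1⟩

theorem stability_iter {s : Finset (Sym2 V)} (B : Finset V)
    (hB : ∀ u ∈ B, u ∉ Dm s ∧ ∃ d ∈ Dm s, s(u, d) ∈ s) :
    nu (ind s (↑B)ᶜ) + B.card = nu s ∧ Dm (ind s (↑B)ᶜ) = Dm s ∪ ↑B := by
  induction B using Finset.induction_on with
  | empty =>
    have : ind s (↑(∅ : Finset V))ᶜ = s := by
      ext e; rw [mem_ind]; simp
    rw [this]; simp
  | insert u B hu ih =>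
    obtain ⟨h1, h2⟩ := ih fun v hv => hB v (Finset.mem_insert_of_mem hv)
    obtain ⟨hu1, d, hd, hud⟩ := hB u (Finset.mem_insert_self u B)
    have hdB : d ∉ B := fun h => (hB d (Finset.mem_insert_of_mem h)).1 hd
    have he : ind s (↑(insert u B))ᶜ = ind (ind s (↑B)ᶜ) {u}ᶜ := by
      ext e; simp only [mem_ind, Finset.coe_insert, Set.mem_compl_iff, Set.mem_insert_iff,
        Set.mem_singleton_iff, Finset.mem_coe, not_or]
      constructor
      · rintro ⟨a, b⟩; exact ⟨⟨a, fun v hv => (b v hv).2⟩, fun v hv => (b v hv).1⟩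
      · rintro ⟨⟨a, b⟩, c⟩; exact ⟨a, fun v hv => ⟨c v hv, b v hv⟩⟩
    obtain ⟨h3, h4⟩ := stability (s := ind s (↑B)ᶜ) (u := u) (d := d)
      (by rw [h2]; rintro (h | h)
          · exact hu1 h
          · exact hu h) (by rw [h2]; exact Or.inl hd) (by
        rw [mem_ind]
        refine ⟨hud, ?_⟩
        intro v hv
        rcases Sym2.mem_iff.1 hv with rfl | rfl
        · exact hu
        · exact hdB)
    rw [he, h4, h2, Finset.card_insert_of_notMem hu]
    refine ⟨by omega, ?_⟩
    ext v; simp only [Set.mem_union, Set.mem_singleton_iff, Finset.mem_coe, Finset.mem_insert]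
    tauto

theorem vertex_removal {s : Finset (Sym2 V)} {v : V} {m : ℕ} :
    (nu s = m ∧ v ∈ Dm s) ↔
      (nu (ind s {v}ᶜ) = m ∧ ∀ w, s(v, w) ∈ s → v ≠ w → w ∉ Dm (ind s {v}ᶜ)) := by
  have hind : ∀ M, M ⊆ ind s {v}ᶜ → v ∉ cv M := fun M hM h => (cv_ind (cv_mono hM h)) rfl
  constructor
  · rintro ⟨rfl, M, hM, hv⟩
    have h1 : M ⊆ ind s {v}ᶜ := sub_ind hM.1 (by
      intro w hw hvw; rw [Set.mem_singleton_iff] at hvw; exact hv (hvw ▸ hw))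
    have h2 := nu_le h1 hM.2.1
    have h3 : nu (ind s {v}ᶜ) ≤ nu s := nu_mono (ind_sub _ _)
    have h4 := hM.2.2
    have h5 : nu (ind s {v}ᶜ) = nu s := by omega
    refine ⟨h5, ?_⟩
    rintro w hw hvw ⟨M', hM', hw'⟩
    obtain ⟨a, b, c, _⟩ := add_edge (hM'.1.trans (ind_sub _ _)) hM'.2.1 hw hvw (hind M' hM'.1) hw'
    have h6 := nu_le a b
    have h7 := hM'.2.2
    omega
  · rintro ⟨h1, h2⟩
    have h3 : nu (ind s {v}ᶜ) ≤ nu s := nu_mono (ind_sub _ _)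
    have h4 : nu s = m := by
      obtain ⟨M, hM⟩ := exists_MM s
      by_cases hv : v ∈ cv M
      · obtain ⟨w, N, hvw, he, hN1, hN2, hN3, hN4⟩ := hM.erase_at hv
        have h5 := nu_le hN1 hN2
        by_contra hne
        refine h2 w (hM.1 he) hvw ⟨N, ⟨hN1, hN2, by omega⟩, ?_⟩
        rw [hN4]; tauto
      · have h5 : M ⊆ ind s {v}ᶜ := sub_ind hM.1 (by
          intro w hw hvw; rw [Set.mem_singleton_iff] at hvw; exact hv (hvw ▸ hw))
        have h6 := nu_le h5 hM.2.1
        have h7 := hM.2.2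
        omega
    refine ⟨h4, ?_⟩
    obtain ⟨K, hK⟩ := exists_MM (ind s {v}ᶜ)
    exact ⟨K, hK.mono (ind_sub _ _) (h1.trans h4.symm), hind K hK.1⟩

/-- counting vertices -/
theorem two_card_le {M : Finset (Sym2 V)} (hM : IsMatching M) :
    ∀ C : Finset V, cv M ⊆ ↑C → 2 * M.card ≤ C.card := by
  induction M using Finset.induction_on with
  | empty => intro C _; simp
  | insert e M he ih =>
    intro C hC
    induction e using Sym2.ind with
    | _ x y =>
    have hne := hM.1 _ (Finset.mem_insert_self _ _)
    rw [Sym2.mk_isDiag_iff] at hne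
    have h1 := ih (hM.sub (Finset.subset_insert _ _)) ((C.erase x).erase y) (by
      intro v hv
      have hvC : v ∈ C := hC ((cv_insert _ _ _).2 (Or.inr hv))
      obtain ⟨f, hf, hvf⟩ := hv
      have hfe : f ≠ s(x, y) := fun h => he (h ▸ hf)
      have hnv := hM.2 f (Finset.mem_insert_of_mem hf) _ (Finset.mem_insert_self _ _) hfe v hvf
      rw [Sym2.mem_iff] at hnv
      push Not at hnv
      rw [Finset.mem_coe, Finset.mem_erase, Finset.mem_erase]
      exact ⟨hnv.2, hnv.1, hvC⟩)
    have hx : x ∈ C := hC ((cv_insert _ _ _).2 (Or.inl (Sym2.mem_mk_left x y)))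
    have hy : y ∈ C := hC ((cv_insert _ _ _).2 (Or.inl (Sym2.mem_mk_right x y)))
    have h2 := Finset.card_erase_add_one hx
    have h3 := Finset.card_erase_add_one (Finset.mem_erase.2 ⟨Ne.symm hne, hy⟩)
    rw [Finset.card_insert_of_notMem he]
    omega

theorem two_card_lt {M : Finset (Sym2 V)} (hM : IsMatching M) {C : Finset V} (h : cv M ⊆ ↑C) {x : V}
    (hx : x ∈ C) (hx' : x ∉ cv M) : 2 * M.card < C.card := by
  have h1 := two_card_le hM (C.erase x) (by
    intro v hv
    rw [Finset.mem_coe, Finset.mem_erase]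
    exact ⟨fun h => hx' (h ▸ hv), h hv⟩)
  have := Finset.card_erase_add_one hx
  omega

theorem touch_le {M : Finset (Sym2 V)} (hM : IsMatching M) {A : Finset V}
    (h : ∀ e ∈ M, ∃ v ∈ e, v ∈ A) : M.card ≤ A.card := by
  rcases M.eq_empty_or_nonempty with rfl | ⟨e0, _⟩
  · simp
  have : Nonempty V := ⟨e0.out.1⟩
  choose! g hg using h
  refine Finset.card_le_card_of_injOn g (fun e he => (hg e he).2) ?_
  intro e he f hf hef
  by_contra hne
  refine hM.2 e he f hf hne (g e) (hg e he).1 ?_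
  rw [hef]; exact (hg f hf).1

theorem touch_lt {M : Finset (Sym2 V)} (hM : IsMatching M) {A : Finset V} {z : V} (hz : z ∈ A)
    (h : ∀ e ∈ M, ∃ v ∈ e, v ∈ A ∧ v ≠ z) : M.card < A.card := by
  have h1 := touch_le hM (A := A.erase z) (by
    intro e he
    obtain ⟨v, a, b, c⟩ := h e he
    exact ⟨v, a, Finset.mem_erase.2 ⟨c, b⟩⟩)
  have := Finset.card_erase_add_one hz
  omega

end missable


section gallai_edmonds
variable {V : Type}

/-- a vertex of `e` in `X` -/
noncomputable def pick (X : Set V) (e : Sym2 V) : V :=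
  if h : ∃ v, v ∈ e ∧ v ∈ X then h.choose else e.out.1

theorem pick_left {X : Set V} {x y : V} (hx : x ∈ X) (hy : y ∉ X) : pick X s(x, y) = x := by
  have h : ∃ v, v ∈ s(x, y) ∧ v ∈ X := ⟨x, Sym2.mem_mk_left x y, hx⟩
  unfold pick
  rw [dif_pos h]
  obtain ⟨h1, h2⟩ := h.choose_spec
  rcases Sym2.mem_iff.1 h1 with h3 | h3
  · exact h3
  · exact absurd (h3 ▸ h2) hy

theorem pick_right {X : Set V} {x y : V} (hx : x ∈ X) (hy : y ∉ X) : pick X s(y, x) = x := by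
  rw [Sym2.eq_swap]; exact pick_left hx hy

/-- class of a vertex -/
def cls (t : Finset (Sym2 V)) (x : V) : Set V := {y | sim t x y}

theorem cls_eq {t : Finset (Sym2 V)} (h : ∀ v, v ∈ Dm t) {x y : V} :
    cls t x = cls t y ↔ sim t x y := by
  constructor
  · intro hc
    have : y ∈ cls t y := Or.inl rfl
    rw [← hc] at this
    exact this
  · intro hs
    ext z
    exact ⟨fun hz => (sim_equiv h).trans (sim_symm hs) hz, fun hz => (sim_equiv h).trans hs hz⟩

theorem isMatching_union {M N : Finset (Sym2 V)} (hM : IsMatching M) (hN : IsMatching N)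
    (hd : ∀ v, v ∈ cv M → v ∉ cv N) : IsMatching (M ∪ N) ∧ (M ∪ N).card = M.card + N.card ∧
      ∀ v, v ∈ cv (M ∪ N) ↔ v ∈ cv M ∨ v ∈ cv N := by
  refine ⟨⟨?_, ?_⟩, ?_, ?_⟩
  · intro e he
    rcases Finset.mem_union.1 he with h | h
    · exact hM.1 e h
    · exact hN.1 e h
  · intro e he f hf hne v hve hvf
    rcases Finset.mem_union.1 he with h | h <;> rcases Finset.mem_union.1 hf with h' | h'
    · exact hM.2 e h f h' hne v hve hvf
    · exact hd v ⟨e, h, hve⟩ ⟨f, h', hvf⟩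
    · exact hd v ⟨f, h', hvf⟩ ⟨e, h, hve⟩
    · exact hN.2 e h f h' hne v hve hvf
  · refine Finset.card_union_of_disjoint ?_
    rw [Finset.disjoint_left]
    intro e he he'
    induction e using Sym2.ind with
    | _ x y =>
    exact hd x ⟨_, he, Sym2.mem_mk_left x y⟩ ⟨_, he', Sym2.mem_mk_left x y⟩
  · intro v
    constructor
    · rintro ⟨e, he, hv⟩
      rcases Finset.mem_union.1 he with h | h
      · exact Or.inl ⟨e, h, hv⟩
      · exact Or.inr ⟨e, h, hv⟩
    · rintro (⟨e, he, hv⟩ | ⟨e, he, hv⟩)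
      · exact ⟨e, Finset.mem_union_left _ he, hv⟩
      · exact ⟨e, Finset.mem_union_right _ he, hv⟩

theorem add_star {s : Finset (Sym2 V)} {N : Finset (Sym2 V)} (hN : N ⊆ s) (hm : IsMatching N)
    (y : V → V) (B : Finset V) (hy : ∀ a ∈ B, s(a, y a) ∈ s ∧ y a ∉ B ∧ y a ∉ cv N)
    (hinj : ∀ a ∈ B, ∀ b ∈ B, y a = y b → a = b) (hB : ∀ a ∈ B, a ∉ cv N) :
    ∃ M, M ⊆ s ∧ IsMatching M ∧ M.card = N.card + B.card ∧
      ∀ v, v ∈ cv M ↔ v ∈ cv N ∨ v ∈ B ∨ ∃ a ∈ B, v = y a := by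
  induction B using Finset.induction_on with
  | empty => exact ⟨N, hN, hm, by simp, by simp⟩
  | insert b B hb ih =>
    obtain ⟨M, h1, h2, h3, h4⟩ := ih
      (fun a ha => by
        obtain ⟨p, q, r⟩ := hy a (Finset.mem_insert_of_mem ha)
        exact ⟨p, fun h => q (Finset.mem_insert_of_mem h), r⟩)
      (fun a ha c hc => hinj a (Finset.mem_insert_of_mem ha) c (Finset.mem_insert_of_mem hc))
      (fun a ha => hB a (Finset.mem_insert_of_mem ha))
    obtain ⟨p, q, r⟩ := hy b (Finset.mem_insert_self b B)
    have hbM : b ∉ cv M := by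
      rw [h4]; rintro (h | h | ⟨a, ha, h⟩)
      · exact hB b (Finset.mem_insert_self b B) h
      · exact hb h
      · exact (hy a (Finset.mem_insert_of_mem ha)).2.1 (h ▸ Finset.mem_insert_self b B)
    have hyM : y b ∉ cv M := by
      rw [h4]; rintro (h | h | ⟨a, ha, h⟩)
      · exact r h
      · exact q (Finset.mem_insert_of_mem h)
      · have := hinj b (Finset.mem_insert_self b B) a (Finset.mem_insert_of_mem ha) h
        exact hb (this ▸ ha)
    obtain ⟨a1, a2, a3, a4⟩ := add_edge h1 h2 p (fun h => q (h ▸ Finset.mem_insert_self b B)) hbM hyM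
    refine ⟨_, a1, a2, ?_, ?_⟩
    · rw [a3, h3, Finset.card_insert_of_notMem hb]; omega
    · intro v; rw [a4, h4]
      simp only [Finset.mem_insert, exists_eq_or_imp]
      tauto

theorem cover_card {M : Finset (Sym2 V)} {C : Finset V} (h : ∀ v ∈ C, v ∈ cv M) :
    C.card ≤ 2 * M.card := by
  have h1 : C ⊆ M.biUnion fun e => {e.out.1, e.out.2} := by
    intro v hv
    obtain ⟨e, he, hve⟩ := h v hv
    refine Finset.mem_biUnion.2 ⟨e, he, ?_⟩
    have h2 : e = s(e.out.1, e.out.2) := by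
      conv_lhs => rw [← Quot.out_eq e]
    rw [h2, Sym2.mem_iff] at hve
    simpa using hve
  have h2 := Finset.card_le_card h1
  have h3 := Finset.card_biUnion_le_card_mul M (fun e => ({e.out.1, e.out.2} : Finset V)) 2
    (fun e _ => Finset.card_le_two)
  omega

/-- neighbours of missable vertices -/
def As (s : Finset (Sym2 V)) : Set V := {v | v ∉ Dm s ∧ ∃ d ∈ Dm s, s(v, d) ∈ s}

theorem As_mono {s t : Finset (Sym2 V)} (h : s ⊆ t) (hD : Dm s = Dm t) : As s ⊆ As t := by
  rintro v ⟨a, d, hd, he⟩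
  exact ⟨hD ▸ a, d, hD ▸ hd, h he⟩

/-- edges between `A` and `D` -/
noncomputable def cut (s : Finset (Sym2 V)) (A D : Set V) : Finset (Sym2 V) :=
  s.filter fun e => ∃ a ∈ A, ∃ d ∈ D, e = s(a, d)

theorem mem_cut {s : Finset (Sym2 V)} {A D : Set V} {e : Sym2 V} :
    e ∈ cut s A D ↔ e ∈ s ∧ ∃ a ∈ A, ∃ d ∈ D, e = s(a, d) := by simp [cut]

theorem split_card {M s : Finset (Sym2 V)} (hMs : M ⊆ s) {D : Set V} {A C : Finset V}
    (hcov : ∀ v, v ∈ D ∨ v ∈ A ∨ v ∈ C) (hDC : ∀ d ∈ D, ∀ c ∈ C, s(c, d) ∉ s) :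
    M.card ≤ (M.filter fun e => ∃ v ∈ e, v ∈ A).card + (ind M D).card + (ind M ↑C).card := by
  have h : M ⊆ (M.filter fun e => ∃ v ∈ e, v ∈ A) ∪ ind M D ∪ ind M ↑C := by
    intro e he
    induction e using Sym2.ind with
    | _ x y =>
    simp only [Finset.mem_union, Finset.mem_filter, mem_ind, Sym2.mem_iff, exists_eq_or_imp,
      forall_eq_or_imp, forall_eq, exists_eq_left, he, true_and, Finset.mem_coe]
    have h1 := hcov x
    have h2 := hcov y
    have h3 := hDC x
    have h4 := hDC y
    have e1 := hMs he
    have e2 : s(y, x) ∈ s := by rw [Sym2.eq_swap]; exact e1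
    by_contra hc
    rcases h1 with h1 | h1 | h1 <;> rcases h2 with h2 | h2 | h2
    all_goals first
      | exact h3 h1 y h2 e2
      | exact h4 h2 x h1 e1
      | tauto
  refine (Finset.card_le_card h).trans ((Finset.card_union_le _ _).trans ?_)
  exact Nat.add_le_add_right (Finset.card_union_le _ _) _

theorem ind_matching {M s : Finset (Sym2 V)} (hMs : M ⊆ s) (hM : IsMatching M) (X : Set V) :
    ind M X ⊆ ind s X ∧ IsMatching (ind M X) ∧ (ind M X).card ≤ nu (ind s X) :=
  ⟨ind_mono hMs X, hM.sub (ind_sub _ _), nu_le (ind_mono hMs X) (hM.sub (ind_sub _ _))⟩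

theorem nu_ind_le (s : Finset (Sym2 V)) (C : Finset V) : 2 * nu (ind s ↑C) ≤ C.card := by
  obtain ⟨M, h1, h2, h3⟩ := exists_MM (ind s ↑C)
  rw [← h3]
  exact two_card_le h2 C fun v hv => cv_ind (cv_mono h1 hv)

variable [LinearOrder (Sym2 V)]

/-- part type map -/
noncomputable def pcl (t : Finset (Sym2 V)) (D : Set V) (e : Sym2 V) : Set V := cls t (pick D e)

theorem ge_lower {s : Finset (Sym2 V)} {D : Set V} {A C : Finset V}
    (hAD : ∀ a ∈ A, a ∉ D) (hCD : ∀ c ∈ C, c ∉ D) (hAC : ∀ a ∈ A, a ∉ C)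
    (hC : 2 * nu (ind s ↑C) = C.card) (hD : ∀ v, v ∈ Dm (ind s D))
    (hPS : PS (pick (↑A : Set V)) (pcl (ind s D) D) A (cut s ↑A D))
    (X : Finset V) (hX : X.card ≤ 1) (hXD : ∀ x ∈ X, x ∈ D) :
    ∃ M, M ⊆ s ∧ IsMatching M ∧ M.card = nu (ind s D) + nu (ind s ↑C) + A.card ∧
      ∀ x ∈ X, x ∉ cv M := by
  set t := ind s D with ht
  have hedge : ∀ e ∈ cut s ↑A D, ∃ a ∈ A, ∃ d ∈ D, e = s(a, d) ∧ pick (↑A : Set V) e = a ∧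
      pick D e = d := by
    intro e he
    obtain ⟨-, a, ha, d, hd, rfl⟩ := mem_cut.1 he
    exact ⟨a, ha, d, hd, rfl, pick_left ha (fun h => hAD d h hd), pick_right hd (hAD a ha)⟩
  let nb : {a // a ∈ A} → Finset (Set V) := fun a =>
    rD (Nb (pick (↑A : Set V)) (pcl t D) (cut s ↑A D) {a.1}) (X.image (cls t))
  have hall : ∀ S : Finset {a // a ∈ A}, S.card ≤ (S.biUnion nb).card := by
    intro S
    rcases S.eq_empty_or_nonempty with rfl | hn
    · simp
    have h1 := hPS (S.image Subtype.val) (by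
      intro a ha
      obtain ⟨b, -, rfl⟩ := Finset.mem_image.1 ha
      exact b.2) (hn.image _)
    rw [Finset.card_image_of_injective _ Subtype.val_injective] at h1
    have h2 : Nb (pick (↑A : Set V)) (pcl t D) (cut s ↑A D) (S.image Subtype.val) ⊆
        S.biUnion nb ∪ X.image (cls t) := by
      intro q hq
      obtain ⟨e, he, a, b⟩ := mem_Nb.1 hq
      obtain ⟨c, hc, hce⟩ := Finset.mem_image.1 a
      by_cases hqX : q ∈ X.image (cls t)
      · exact Finset.mem_union_right _ hqX
      · refine Finset.mem_union_left _ (Finset.mem_biUnion.2 ⟨c, hc, mem_rD.2 ⟨?_, hqX⟩⟩)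
        exact mem_Nb.2 ⟨e, he, by rw [← hce]; exact Finset.mem_singleton_self _, b⟩
    have h3 := (Finset.card_le_card h2).trans (Finset.card_union_le _ _)
    have h4 : (X.image (cls t)).card ≤ X.card := Finset.card_image_le
    omega
  obtain ⟨f, hf, hfn⟩ := (Finset.all_card_le_biUnion_card_iff_exists_injective nb).1 hall
  have hy : ∀ a : {a // a ∈ A}, ∃ y, y ∈ D ∧ s(a.1, y) ∈ s ∧ cls t y = f a := by
    intro a
    obtain ⟨e, he, h1, h2⟩ := mem_Nb.1 (mem_rD.1 (hfn a)).1
    obtain ⟨b, hb, d, hd, h3, h4, h5⟩ := hedge e he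
    rw [h4, Finset.mem_singleton] at h1
    refine ⟨d, hd, ?_, ?_⟩
    · rw [← h1, ← h3]; exact (mem_cut.1 he).1
    · rw [← h2]; unfold pcl; rw [h5]
  choose y0 hy1 hy2 hy3 using hy
  let y : V → V := fun a => if h : a ∈ A then y0 ⟨a, h⟩ else a
  have hyv : ∀ a (h : a ∈ A), y a = y0 ⟨a, h⟩ := fun a h => dif_pos h
  have hyc : ∀ a (h : a ∈ A), cls t (y a) = f ⟨a, h⟩ := fun a h => by rw [hyv a h, hy3]
  have hyinj : ∀ a ∈ A, ∀ b ∈ A, cls t (y a) = cls t (y b) → a = b := by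
    intro a ha b hb h
    rw [hyc a ha, hyc b hb] at h
    exact congrArg Subtype.val (hf h)
  have hyX : ∀ a ∈ A, ∀ x ∈ X, cls t (y a) ≠ cls t x := by
    intro a ha x hx h
    rw [hyc a ha] at h
    refine (mem_rD.1 (hfn ⟨a, ha⟩)).2 ?_
    rw [h]; exact Finset.mem_image_of_mem _ hx
  have hXX : ∀ x ∈ X, ∀ x' ∈ X, x = x' := Finset.card_le_one.1 hX
  obtain ⟨MD, hMD, hmiss⟩ := transversal hD (A.image y ∪ X) (by
    intro u hu v hv huv
    rw [← cls_eq hD]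
    rcases Finset.mem_union.1 hu with hu | hu <;> rcases Finset.mem_union.1 hv with hv | hv
    · obtain ⟨a, ha, rfl⟩ := Finset.mem_image.1 hu
      obtain ⟨b, hb, rfl⟩ := Finset.mem_image.1 hv
      intro h
      exact huv (by rw [hyinj a ha b hb h])
    · obtain ⟨a, ha, rfl⟩ := Finset.mem_image.1 hu
      exact hyX a ha v hv
    · obtain ⟨a, ha, rfl⟩ := Finset.mem_image.1 hv
      exact (hyX a ha u hu).symm
    · exact fun _ => huv (hXX u hu v hv))
  obtain ⟨MC, hMC⟩ := exists_MM (ind s ↑C)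
  have hcD : ∀ v, v ∈ cv MD → v ∈ D := fun v hv => cv_ind (cv_mono hMD.1 hv)
  have hcC : ∀ v, v ∈ cv MC → v ∈ C := fun v hv => cv_ind (cv_mono hMC.1 hv)
  obtain ⟨u1, u2, u3⟩ := isMatching_union hMD.2.1 hMC.2.1
    (fun v h1 h2 => hCD v (hcC v h2) (hcD v h1))
  have hyD : ∀ a ∈ A, y a ∈ D := fun a ha => by rw [hyv a ha]; exact hy1 _
  obtain ⟨M, m1, m2, m3, m4⟩ := add_star (s := s) (N := MD ∪ MC)
    (Finset.union_subset (hMD.1.trans (ind_sub _ _)) (hMC.1.trans (ind_sub _ _))) u1 y A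
    (by
      intro a ha
      refine ⟨by rw [hyv a ha]; exact hy2 ⟨a, ha⟩, fun h => hAD _ h (hyD a ha), ?_⟩
      rw [u3]; rintro (h | h)
      · exact hmiss _ (Finset.mem_union_left _ (Finset.mem_image_of_mem _ ha)) h
      · exact hCD _ (hcC _ h) (hyD a ha))
    (fun a ha b hb h => hyinj a ha b hb (by rw [h]))
    (by
      intro a ha
      rw [u3]; rintro (h | h)
      · exact hAD a ha (hcD _ h)
      · exact hAC a ha (hcC _ h))
  refine ⟨M, m1, m2, ?_, ?_⟩
  · rw [m3, u2, hMD.2.2, hMC.2.2]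
  · intro x hx
    rw [m4, u3]
    rintro ((h | h) | h | ⟨a, ha, h⟩)
    · exact hmiss x (Finset.mem_union_right _ hx) h
    · exact hCD x (hcC x h) (hXD x hx)
    · exact hAD x h (hXD x hx)
    · exact hyX a ha x hx (by rw [h])

theorem ge_back {s : Finset (Sym2 V)} {D : Set V} {A C : Finset V}
    (hAD : ∀ a ∈ A, a ∉ D) (hCD : ∀ c ∈ C, c ∉ D) (hAC : ∀ a ∈ A, a ∉ C)
    (hcov : ∀ v, v ∈ D ∨ v ∈ A ∨ v ∈ C) (hDC : ∀ d ∈ D, ∀ c ∈ C, s(c, d) ∉ s)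
    (hC : 2 * nu (ind s ↑C) = C.card) (hD : ∀ v, v ∈ Dm (ind s D))
    (hPS : PS (pick (↑A : Set V)) (pcl (ind s D) D) A (cut s ↑A D)) :
    nu s = nu (ind s D) + nu (ind s ↑C) + A.card ∧ Dm s = D ∧ As s = ↑A := by
  have hl := ge_lower hAD hCD hAC hC hD hPS
  have hup : ∀ M, M ⊆ s → IsMatching M →
      (M.filter fun e => ∃ v ∈ e, v ∈ A).card ≤ A.card ∧ (ind M D).card ≤ nu (ind s D) ∧
      (ind M ↑C).card ≤ nu (ind s ↑C) := by
    intro M h1 h2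
    refine ⟨touch_le (h2.sub (Finset.filter_subset _ _)) ?_, (ind_matching h1 h2 _).2.2,
      (ind_matching h1 h2 _).2.2⟩
    intro e he
    exact (Finset.mem_filter.1 he).2
  have hnu : nu s = nu (ind s D) + nu (ind s ↑C) + A.card := by
    apply le_antisymm
    · obtain ⟨M, hM⟩ := exists_MM s
      obtain ⟨a, b, c⟩ := hup M hM.1 hM.2.1
      have := split_card hM.1 hcov hDC
      have := hM.2.2
      omega
    · obtain ⟨M, a, b, c, -⟩ := hl ∅ (by simp) (by simp)
      rw [← c]; exact nu_le a b
  have hDm : Dm s = D := by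
    apply Set.Subset.antisymm
    · rintro v ⟨M, hM, hv⟩
      obtain ⟨a, b, c⟩ := hup M hM.1 hM.2.1
      have h1 := split_card hM.1 hcov hDC
      have h2 := hM.2.2
      rcases hcov v with h | h | h
      · exact h
      · exfalso
        have := touch_lt (hM.2.1.sub (Finset.filter_subset (fun e => ∃ v ∈ e, v ∈ A) M)) h (by
          intro e he
          obtain ⟨he, w, hw, hwA⟩ := Finset.mem_filter.1 he
          exact ⟨w, hw, hwA, fun h => hv ⟨e, he, h ▸ hw⟩⟩)
        omega
      · exfalso
        have := two_card_lt (hM.2.1.sub (ind_sub M ↑C)) (C := C) (fun v hv => cv_ind hv) h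
          (fun h => hv (cv_mono (ind_sub _ _) h))
        omega
    · intro v hv
      obtain ⟨M, a, b, c, d⟩ := hl {v} (by simp) (by
        intro x hx; rw [Finset.mem_singleton.1 hx]; exact hv)
      exact ⟨M, ⟨a, b, c.trans hnu.symm⟩, d v (Finset.mem_singleton_self v)⟩
  refine ⟨hnu, hDm, ?_⟩
  ext v
  constructor
  · rintro ⟨h1, d, hd, he⟩
    rw [hDm] at h1 hd
    rcases hcov v with h | h | h
    · exact absurd h h1
    · exact h
    · exact absurd he (hDC d hd v h)
  · intro hv
    refine ⟨by rw [hDm]; exact hAD v hv, ?_⟩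
    have h1 := hPS {v} (by simpa using hv) (by simp)
    have h2 : (Nb (pick (↑A : Set V)) (pcl (ind s D) D) (cut s ↑A D) {v}).Nonempty :=
      Finset.card_pos.1 (by omega)
    obtain ⟨q, hq⟩ := h2
    obtain ⟨e, he, h1, h2⟩ := mem_Nb.1 hq
    obtain ⟨hes, a, ha, d, hd, rfl⟩ := mem_cut.1 he
    rw [pick_left ha (fun h => hAD d h hd), Finset.mem_singleton] at h1
    subst h1
    exact ⟨d, hDm.symm ▸ hd, hes⟩

theorem ge_forw {s : Finset (Sym2 V)} {D : Set V} {A C : Finset V}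
    (hAD : ∀ a ∈ A, a ∉ D) (hCD : ∀ c ∈ C, c ∉ D) (hAC : ∀ a ∈ A, a ∉ C)
    (hcov : ∀ v, v ∈ D ∨ v ∈ A ∨ v ∈ C) (hDm : Dm s = D) (hAs : As s = ↑A) :
    (∀ d ∈ D, ∀ c ∈ C, s(c, d) ∉ s) ∧ 2 * nu (ind s ↑C) = C.card ∧ (∀ v, v ∈ Dm (ind s D)) ∧
    PS (pick (↑A : Set V)) (pcl (ind s D) D) A (cut s ↑A D) := by
  have hDC : ∀ d ∈ D, ∀ c ∈ C, s(c, d) ∉ s := by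
    intro d hd c hc he
    have h1 : c ∈ As s := ⟨by rw [hDm]; exact hCD c hc, d, by rw [hDm]; exact hd, he⟩
    rw [hAs] at h1
    exact hAC c h1 hc
  obtain ⟨hn, hDr⟩ := stability_iter (s := s) A (by
    intro u hu
    have : u ∈ As s := by rw [hAs]; exact hu
    exact this)
  set r := ind s (↑A)ᶜ with hr
  rw [hDm] at hDr
  have hrs : r ⊆ s := ind_sub _ _
  have hnoA : ∀ M, M ⊆ r → (M.filter fun e => ∃ v ∈ e, v ∈ A).card = 0 := by
    intro M hM
    rw [Finset.card_eq_zero, Finset.filter_eq_empty_iff]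
    rintro e he ⟨v, hv, hvA⟩
    exact (mem_ind.1 (hM he)).2 v hv hvA
  have hCle := nu_ind_le s C
  have hsp : ∀ M, M ⊆ s → IsMatching M → (∀ v ∈ C, v ∈ cv (ind M ↑C)) → 2 * nu (ind s ↑C) = C.card := by
    intro M h1 h2 h3
    have h4 := cover_card h3
    have h5 := (ind_matching h1 h2 (↑C)).2.2
    omega
  obtain ⟨M, hM⟩ := exists_MM r
  have hC : 2 * nu (ind s ↑C) = C.card := by
    refine hsp M (hM.1.trans hrs) hM.2.1 ?_
    intro c hc
    have h1 : c ∈ cv M := by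
      by_contra h
      have : c ∈ Dm r := ⟨M, hM, h⟩
      rw [hDr] at this
      rcases this with h | h
      · exact hCD c hc h
      · exact hAC c h hc
    obtain ⟨z, hcz, he⟩ := exists_other hM.2.1 h1
    have hz : z ∈ C := by
      rcases hcov z with h | h | h
      · exact absurd (hrs (hM.1 he)) (hDC z h c hc)
      · exact absurd h ((mem_ind.1 (hM.1 he)).2 z (Sym2.mem_mk_right c z))
      · exact h
    refine ⟨s(c, z), mem_ind.2 ⟨he, ?_⟩, Sym2.mem_mk_left c z⟩
    intro v hv
    rcases Sym2.mem_iff.1 hv with rfl | rfl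
    · exact hc
    · exact hz
  have hnr : nu r = nu (ind s D) + nu (ind s ↑C) := by
    apply le_antisymm
    · have h1 := split_card (hM.1.trans hrs) hcov hDC
      have h2 := hnoA M hM.1
      have h3 := (ind_matching (hM.1.trans hrs) hM.2.1 (↑C)).2.2
      have h4 := (ind_matching (hM.1.trans hrs) hM.2.1 D).2.2
      have h5 := hM.2.2
      omega
    · obtain ⟨M1, a1⟩ := exists_MM (ind s D)
      obtain ⟨M2, a2⟩ := exists_MM (ind s ↑C)
      obtain ⟨u1, u2, u3⟩ := isMatching_union a1.2.1 a2.2.1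
        (fun v h1 h2 => hCD v (cv_ind (cv_mono a2.1 h2)) (cv_ind (cv_mono a1.1 h1)))
      have := nu_le (s := r) (Finset.union_subset
        (sub_ind (a1.1.trans (ind_sub _ _)) fun v hv hA => hAD v hA (cv_ind (cv_mono a1.1 hv)))
        (sub_ind (a2.1.trans (ind_sub _ _)) fun v hv hA => hAC v hA (cv_ind (cv_mono a2.1 hv)))) u1
      rw [u2, a1.2.2, a2.2.2] at this
      exact this
  have hD : ∀ v, v ∈ Dm (ind s D) := by
    intro v
    by_cases hv : v ∈ D
    · have : v ∈ Dm r := by rw [hDr]; exact Or.inl hv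
      obtain ⟨N, hN, hvN⟩ := this
      have h1 := split_card (hN.1.trans hrs) hcov hDC
      have h2 := hnoA N hN.1
      have h3 := (ind_matching (hN.1.trans hrs) hN.2.1 (↑C)).2.2
      obtain ⟨h4, h4', h4''⟩ := (ind_matching (hN.1.trans hrs) hN.2.1 D)
      have h5 := hN.2.2
      exact ⟨ind N D, ⟨h4, h4', by omega⟩, fun h => hvN (cv_mono (ind_sub _ _) h)⟩
    · obtain ⟨N, hN⟩ := exists_MM (ind s D)
      exact ⟨N, hN, fun h => hv (cv_ind (cv_mono hN.1 h))⟩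
  refine ⟨hDC, hC, hD, ?_⟩
  intro S hS hSn
  obtain ⟨a0, ha0⟩ := hSn
  have h0 : a0 ∈ As s := by rw [hAs]; exact hS ha0
  obtain ⟨ha0', d0, hd0, he0⟩ := h0
  have hd0D : d0 ∈ D := hDm ▸ hd0
  obtain ⟨N, hN, hdN⟩ := hd0
  have h1 := split_card hN.1 hcov hDC
  have h2 : (N.filter fun e => ∃ v ∈ e, v ∈ A).card ≤ A.card :=
    touch_le (hN.2.1.sub (Finset.filter_subset _ _)) (fun e he => (Finset.mem_filter.1 he).2)
  have h3 := (ind_matching hN.1 hN.2.1 (↑C)).2.2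
  obtain ⟨h4, h4', h4''⟩ := (ind_matching hN.1 hN.2.1 D)
  have h5 := hN.2.2
  have hND : MM (ind s D) (ind N D) := ⟨h4, h4', by omega⟩
  have hex : ∀ a, ∃ z, a ∈ A → z ∈ D ∧ s(a, z) ∈ N := by
    intro a
    by_cases ha : a ∈ A
    swap
    · exact ⟨a, fun h => absurd h ha⟩
    have haN : a ∈ cv N := by
      by_contra h
      have : a ∈ Dm s := ⟨N, hN, h⟩
      rw [hDm] at this
      exact hAD a ha this
    obtain ⟨z, haz, he⟩ := exists_other hN.2.1 haN
    refine ⟨z, fun _ => ⟨?_, he⟩⟩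
    rcases hcov z with h | h | h
    · exact h
    · exfalso
      have := touch_lt (hN.2.1.sub (Finset.filter_subset (fun e => ∃ v ∈ e, v ∈ A) N)) h (by
        intro e hh
        obtain ⟨heN, w, hw, hwA⟩ := Finset.mem_filter.1 hh
        by_cases hwz : w = z
        · subst hwz
          have : e = s(a, w) := by
            by_contra hne
            exact hN.2.1.2 e heN _ he hne w hw (Sym2.mem_mk_right a w)
          subst this
          exact ⟨a, Sym2.mem_mk_left a w, ha, haz⟩
        · exact ⟨w, hw, hwA, hwz⟩)
      omega
    · exfalso
      have := two_card_lt (hN.2.1.sub (ind_sub N ↑C)) (C := C) (fun v hv => cv_ind hv) h (by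
        rintro ⟨f, hf, hzf⟩
        obtain ⟨hfN, hfC⟩ := mem_ind.1 hf
        have : f = s(a, z) := by
          by_contra hne
          exact hN.2.1.2 f hfN _ he hne z hzf (Sym2.mem_mk_right a z)
        subst this
        exact hAC a ha (hfC a (Sym2.mem_mk_left a z)))
      omega
  choose y hy using hex
  have hyN : ∀ a ∈ A, y a ∉ cv (ind N D) := by
    rintro a ha ⟨f, hf, hzf⟩
    obtain ⟨hfN, hfC⟩ := mem_ind.1 hf
    have : f = s(a, y a) := by
      by_contra hne
      exact hN.2.1.2 f hfN _ (hy a ha).2 hne (y a) hzf (Sym2.mem_mk_right a _)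
    subst this
    exact hAD a ha (hfC a (Sym2.mem_mk_left a _))
  have hyinj : ∀ a ∈ A, ∀ b ∈ A, y a = y b → a = b := by
    intro a ha b hb h
    have h6 : s(a, y a) = s(b, y b) := by
      by_contra hne
      refine hN.2.1.2 _ (hy a ha).2 _ (hy b hb).2 hne (y a) (Sym2.mem_mk_right a _) ?_
      rw [h]; exact Sym2.mem_mk_right b _
    rw [← h] at h6
    exact Sym2.congr_left.1 h6
  have hd0N : d0 ∉ cv (ind N D) := fun h => hdN (cv_mono (ind_sub _ _) h)
  have hyd : ∀ a ∈ A, y a ≠ d0 := fun a ha h => hdN (h ▸ ⟨_, (hy a ha).2, Sym2.mem_mk_right a _⟩)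
  let T : Finset V := insert d0 (S.image y)
  have hTN : ∀ x ∈ T, x ∉ cv (ind N D) := by
    intro x hx
    rcases Finset.mem_insert.1 hx with rfl | hx
    · exact hd0N
    · obtain ⟨a, ha, rfl⟩ := Finset.mem_image.1 hx
      exact hyN a (hS ha)
  have hTc : T.card = S.card + 1 := by
    rw [Finset.card_insert_of_notMem, Finset.card_image_of_injOn]
    · intro a ha b hb h
      exact hyinj a (hS ha) b (hS hb) h
    · intro h
      obtain ⟨a, ha, h⟩ := Finset.mem_image.1 h
      exact hyd a (hS ha) h
  have hTi : (T.image (cls (ind s D))).card = T.card := by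
    refine Finset.card_image_of_injOn ?_
    intro u hu v hv h
    rw [cls_eq hD] at h
    rcases h with h | h
    · exact h
    · exfalso
      rcases h _ hND with h | h
      · exact hTN u hu h
      · exact hTN v hv h
  have hsub : T.image (cls (ind s D)) ⊆ Nb (pick (↑A : Set V)) (pcl (ind s D) D) (cut s ↑A D) S := by
    have key : ∀ a ∈ S, ∀ d ∈ D, s(a, d) ∈ s →
        cls (ind s D) d ∈ Nb (pick (↑A : Set V)) (pcl (ind s D) D) (cut s ↑A D) S := by
      intro a ha d hd he
      refine mem_Nb.2 ⟨s(a, d), mem_cut.2 ⟨he, a, hS ha, d, hd, rfl⟩, ?_, ?_⟩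
      · rw [pick_left (hS ha) (fun h => hAD d h hd)]; exact ha
      · unfold pcl; rw [pick_right hd (hAD a (hS ha))]
    intro q hq
    obtain ⟨x, hx, rfl⟩ := Finset.mem_image.1 hq
    rcases Finset.mem_insert.1 hx with rfl | hx
    · exact key a0 ha0 x hd0D he0
    · obtain ⟨a, ha, rfl⟩ := Finset.mem_image.1 hx
      exact key a ha _ (hy a (hS ha)).1 (hN.1 (hy a (hS ha)).2)
  have := Finset.card_le_card hsub
  omega

end gallai_edmonds


section mainclaims
variable {V : Type} [LinearOrder (Sym2 V)] {F}

/-- families `R` -/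
def Rf (m : ℕ) (N : Set V) (s : Finset (Sym2 V)) : Prop := nu s = m ∧ N ⊆ Dm s

/-- families `T` -/
def Tf (m : ℕ) (D : Set V) (s : Finset (Sym2 V)) : Prop := nu s = m ∧ Dm s = D

theorem nu_mid {s t r : Finset (Sym2 V)} {m : ℕ} (h1 : s ⊆ t) (h2 : t ⊆ r) (hs : nu s = m)
    (hr : nu r = m) : nu t = m := by
  have a1 := nu_mono h1
  have a2 := nu_mono h2
  omega

theorem Rf.convOn (E : Finset (Sym2 V)) (m : ℕ) (N : Set V) : ConvOn E (Rf m N) := by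
  rintro s t r hst htr _ ⟨h1, h2⟩ ⟨h3, h4⟩
  have h5 := nu_mid hst htr h1 h3
  exact ⟨h5, h2.trans (Dm_mono hst (h1.trans h5.symm))⟩

theorem Tf.convOn (E : Finset (Sym2 V)) (m : ℕ) (D : Set V) : ConvOn E (Tf m D) := by
  rintro s t r hst htr _ ⟨h1, h2⟩ ⟨h3, h4⟩
  have h5 := nu_mid hst htr h1 h3
  refine ⟨h5, Set.Subset.antisymm ?_ ?_⟩
  · rw [← h4]; exact Dm_mono htr (h5.trans h3.symm)
  · rw [← h2]; exact Dm_mono hst (h1.trans h5.symm)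

theorem nu_zero {s : Finset (Sym2 V)} (hl : ∀ e ∈ s, ¬ e.IsDiag) (h : nu s = 0) : s = ∅ := by
  rw [Finset.eq_empty_iff_forall_notMem]
  intro e he
  have := nu_le (s := s) (M := {e}) (by simpa using he) (by
    constructor
    · intro f hf; rw [Finset.mem_singleton.1 hf]; exact hl e he
    · intro f hf g hg hne
      rw [Finset.mem_singleton] at hf hg
      exact absurd (hf.trans hg.symm) hne)
  rw [Finset.card_singleton] at this
  omega

theorem Dm_of_zero {s : Finset (Sym2 V)} (h : nu s = 0) (v : V) : v ∈ Dm s := by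
  obtain ⟨M, hM⟩ := exists_MM s
  refine ⟨M, hM, ?_⟩
  have h1 := hM.2.2
  rw [h, Finset.card_eq_zero] at h1
  rw [h1]
  rintro ⟨e, he, _⟩
  simp at he

/-- stratification at a star -/
theorem SV.star {E : Finset (Sym2 V)} (hl : ∀ e ∈ E, ¬ e.IsDiag) (v : V) (n b : ℕ)
    (B : Set V → Prop)
    (hc : ConvOn E (fun s => nu (ind s {v}ᶜ) = n ∧
      B {w | s(v, w) ∈ s ∧ w ∈ Dm (ind s {v}ᶜ)}))
    (h : SV F E (fun s => (nu (ind s {v}ᶜ) = n ∧ {w | s(v, w) ∈ E} ⊆ Dm (ind s {v}ᶜ)) ∧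
      B {w | s(v, w) ∈ s}) b) :
    SV F E (fun s => nu (ind s {v}ᶜ) = n ∧
      B {w | s(v, w) ∈ s ∧ w ∈ Dm (ind s {v}ᶜ)}) b := by
  refine SV.strat (fun s => {w | s(v, w) ∈ E ∧ w ∈ Dm (ind s {v}ᶜ)}) hc ?_ ?_
  · rintro s t hst _ ⟨h1, _⟩ ⟨h2, _⟩ w ⟨hw, hwD⟩
    exact ⟨hw, Dm_mono (ind_mono hst _) (h1.trans h2.symm) hwD⟩
  intro a
  by_cases ha : ∃ w, s(v, w) ∈ E ∧ w ∉ a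
  · obtain ⟨w, hw, hwa⟩ := ha
    refine SV.cone s(v, w) hw ?_ b
    intro s hs hsE
    have h1 : ind (Finset.cons s(v, w) s hs) {v}ᶜ = ind s {v}ᶜ := by
      ext e
      simp only [mem_ind, Finset.mem_cons]
      constructor
      · rintro ⟨rfl | h2, h3⟩
        · exact absurd rfl (h3 v (Sym2.mem_mk_left v w))
        · exact ⟨h2, h3⟩
      · rintro ⟨h2, h3⟩; exact ⟨Or.inr h2, h3⟩
    rw [h1]
    have h2 : {x | s(v, x) ∈ E ∧ x ∈ Dm (ind s {v}ᶜ)} = a →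
        {x | s(v, x) ∈ Finset.cons s(v, w) s hs ∧ x ∈ Dm (ind s {v}ᶜ)} =
        {x | s(v, x) ∈ s ∧ x ∈ Dm (ind s {v}ᶜ)} := by
      intro h3
      have h4 : w ∉ Dm (ind s {v}ᶜ) := fun h5 => hwa (h3 ▸ ⟨hw, h5⟩)
      ext x
      simp only [Set.mem_ofPred_eq, Finset.mem_cons]
      constructor
      · rintro ⟨h5 | h5, h6⟩
        · exact absurd ((Sym2.congr_right.1 h5) ▸ h6) h4
        · exact ⟨h5, h6⟩
      · rintro ⟨h5, h6⟩; exact ⟨Or.inr h5, h6⟩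
    constructor
    · rintro ⟨⟨h3, h4⟩, h5⟩; exact ⟨⟨h3, by rw [h2 h5]; exact h4⟩, h5⟩
    · rintro ⟨⟨h3, h4⟩, h5⟩; exact ⟨⟨h3, by rw [h2 h5] at h4; exact h4⟩, h5⟩
  · push Not at ha
    by_cases ha' : a ⊆ {w | s(v, w) ∈ E}
    swap
    · refine SV.empty ?_ b
      rintro s hs ⟨_, h1⟩
      exact ha' (h1 ▸ fun w hw => hw.1)
    refine h.congr ?_
    intro s hs
    have h0 : {w | s(v, w) ∈ E ∧ w ∈ Dm (ind s {v}ᶜ)} = a ↔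
        {w | s(v, w) ∈ E} ⊆ Dm (ind s {v}ᶜ) := by
      constructor
      · intro h1 w hw
        have : w ∈ a := ha w hw
        rw [← h1] at this
        exact this.2
      · intro h1
        ext w
        exact ⟨fun h2 => ha w h2.1, fun h2 => ⟨ha' h2, h1 (ha' h2)⟩⟩
    rw [h0]
    have h2 : {w | s(v, w) ∈ E} ⊆ Dm (ind s {v}ᶜ) →
        {x | s(v, x) ∈ s ∧ x ∈ Dm (ind s {v}ᶜ)} = {x | s(v, x) ∈ s} := by
      intro h3
      ext x
      exact ⟨fun h4 => h4.1, fun h4 => ⟨h4, h3 (hs h4)⟩⟩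
    constructor
    · rintro ⟨⟨h3, h4⟩, h5⟩; exact ⟨⟨h3, h5⟩, by rw [h2 h5] at h4; exact h4⟩
    · rintro ⟨⟨h3, h5⟩, h4⟩; exact ⟨⟨h3, by rw [h2 h5]; exact h4⟩, h5⟩

theorem edge_at {e : Sym2 V} (he : ¬ e.IsDiag) {v : V} (hv : v ∈ e) : ∃ w, v ≠ w ∧ e = s(v, w) := by
  obtain ⟨w, rfl⟩ := Sym2.mem_iff_exists.1 hv
  rw [Sym2.mk_isDiag_iff] at he
  exact ⟨w, he, rfl⟩

theorem sub_ind_compl {s E : Finset (Sym2 V)} (hs : s ⊆ E) (hl : ∀ e ∈ E, ¬ e.IsDiag) (v : V) :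
    s ⊆ ind E {v}ᶜ ↔ ∀ w, s(v, w) ∉ s := by
  constructor
  · intro h w hw
    exact (mem_ind.1 (h hw)).2 v (Sym2.mem_mk_left v w) rfl
  · intro h e he
    refine mem_ind.2 ⟨hs he, ?_⟩
    intro x hx hxv
    rw [Set.mem_singleton_iff] at hxv
    subst hxv
    obtain ⟨w, _, rfl⟩ := edge_at (hl e (hs he)) hx
    exact h w he

theorem ind_eq_of_sub {s E : Finset (Sym2 V)} {X : Set V} (h : s ⊆ ind E X) : ind s X = s := by
  ext e
  rw [mem_ind]
  exact ⟨fun h => h.1, fun he => ⟨he, (mem_ind.1 (h he)).2⟩⟩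

theorem rI_ind {s E : Finset (Sym2 V)} (hs : s ⊆ E) (X : Set V) : rI s (ind E X) = ind s X := by
  ext e
  rw [mem_rI, mem_ind, mem_ind]
  exact ⟨fun h => ⟨h.1, h.2.2⟩, fun h => ⟨h.1, hs h.1, h.2⟩⟩

theorem SV.star_upper {E : Finset (Sym2 V)} (hl : ∀ e ∈ E, ¬ e.IsDiag) (v : V) (m b : ℕ)
    (h : SV F (ind E {v}ᶜ) (Rf m {w | s(v, w) ∈ E}) b) :
    SV F E (fun s => nu s = m ∧ v ∈ Dm s) b := by
  have hiff : ∀ s, s ⊆ E → ((nu s = m ∧ v ∈ Dm s) ↔ (nu (ind s {v}ᶜ) = m ∧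
      {w | s(v, w) ∈ s ∧ w ∈ Dm (ind s {v}ᶜ)} = ∅)) := by
    intro s hs
    rw [vertex_removal, Set.eq_empty_iff_forall_notMem]
    refine and_congr_right fun _ => forall_congr' fun w => ?_
    constructor
    · rintro h1 ⟨h2, h3⟩
      refine h1 h2 ?_ h3
      have := hl _ (hs h2)
      rwa [Sym2.mk_isDiag_iff] at this
    · intro h1 h2 _ h3
      exact h1 ⟨h2, h3⟩
  have hconv : ConvOn E (fun s => nu s = m ∧ v ∈ Dm s) :=
    (Rf.convOn E m {v}).congr fun s _ => by unfold Rf; rw [Set.singleton_subset_iff]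
  refine SV.congr ?_ hiff
  refine SV.star hl v m b (fun S => S = ∅) (hconv.congr fun s hs => (hiff s hs).symm) ?_
  refine (SV.restrict (ind_sub E _) (Rf.convOn _ _ _) h).congr ?_
  intro s hs
  rw [sub_ind_compl hs hl, Set.eq_empty_iff_forall_notMem]
  constructor
  · rintro ⟨h1, h2⟩
    refine ⟨h2, ?_⟩
    have h3 := ind_eq_of_sub ((sub_ind_compl hs hl v).2 h2)
    rw [h3] at h1
    exact h1
  · rintro ⟨h2, h1⟩
    have h3 := ind_eq_of_sub ((sub_ind_compl hs hl v).2 h2)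
    rw [h3]
    exact ⟨h1, h2⟩

theorem SV.perfect {E : Finset (Sym2 V)} (hl : ∀ e ∈ E, ¬ e.IsDiag) (C : Finset V)
    (hC : ∀ e ∈ E, ∀ v ∈ e, v ∈ C) (c : ℕ) (hc : C.card = 2 * (c + 1))
    (h : ∀ E : Finset (Sym2 V), (∀ e ∈ E, ¬ e.IsDiag) → ∀ N, SV F E (Rf c N) (3 * c)) :
    SV F E (fun s => nu s = c + 1) (3 * c + 1) := by
  obtain ⟨v, hv⟩ : C.Nonempty := Finset.card_pos.1 (by omega)
  have hcvC : ∀ s, s ⊆ E → cv s ⊆ ↑C := by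
    rintro s hs x ⟨e, he, hx⟩
    exact hC e (hs he) x hx
  have hiff : ∀ s, s ⊆ E → (nu s = c + 1 ↔ (nu (ind s {v}ᶜ) = c ∧
      {w | s(v, w) ∈ s ∧ w ∈ Dm (ind s {v}ᶜ)} ≠ ∅)) := by
    intro s hs
    rw [← Set.nonempty_iff_ne_empty]
    have hind : ∀ M, M ⊆ ind s {v}ᶜ → v ∉ cv M := fun M hM h => (cv_ind (cv_mono hM h)) rfl
    constructor
    · intro hn
      obtain ⟨K, hK⟩ := exists_MM (ind s {v}ᶜ)
      have k1 := two_card_lt hK.2.1 (hcvC K (hK.1.trans ((ind_sub _ _).trans hs))) hv (hind K hK.1)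
      have k2 := hK.2.2
      obtain ⟨M, hM⟩ := exists_MM s
      have hvM : v ∈ cv M := by
        by_contra hc'
        have := two_card_lt hM.2.1 (hcvC M (hM.1.trans hs)) hv hc'
        have := hM.2.2
        omega
      obtain ⟨w, N, hvw, he, hN1, hN2, hN3, hN4⟩ := hM.erase_at hvM
      have k3 := nu_le hN1 hN2
      have k4 : nu (ind s {v}ᶜ) = c := by omega
      refine ⟨k4, w, hM.1 he, N, ⟨hN1, hN2, by omega⟩, ?_⟩
      rw [hN4]; tauto
    · rintro ⟨h1, w, hw, M, hM, hwM⟩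
      have hvw : v ≠ w := by
        have := hl _ (hs hw)
        rwa [Sym2.mk_isDiag_iff] at this
      obtain ⟨a1, a2, a3, _⟩ := add_edge (hM.1.trans (ind_sub _ _)) hM.2.1 hw hvw (hind M hM.1) hwM
      have k1 := nu_le a1 a2
      have k2 := hM.2.2
      obtain ⟨K, hK⟩ := exists_MM s
      have k3 := two_card_le hK.2.1 C (hcvC K (hK.1.trans hs))
      have k4 := hK.2.2
      omega
  have hconv : ConvOn E (fun s => nu s = c + 1) := by
    rintro s t r hst htr _ h1 h2
    exact nu_mid hst htr h1 h2
  refine SV.congr ?_ hiff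
  refine SV.star hl v c _ (fun S => S ≠ ∅) (hconv.congr fun s hs => (hiff s hs).symm) ?_
  refine SV.prod (E1 := ind E {v}ᶜ) (E2 := E.filter fun e => v ∈ e)
    (P1 := Rf c {w | s(v, w) ∈ E}) (P2 := fun s => s ≠ ∅) ?_ ?_ (Rf.convOn _ _ _) ?_
    (h _ (fun e he => hl e (ind_sub _ _ he)) _) (SV.nonempty _) le_rfl
  · intro e
    rw [mem_ind, Finset.mem_filter]
    constructor
    · intro he
      by_cases hve : v ∈ e
      · exact Or.inr ⟨he, hve⟩
      · exact Or.inl ⟨he, fun x hx hxv => hve (hxv ▸ hx)⟩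
    · rintro (h | h) <;> exact h.1
  · intro e he h2
    exact (mem_ind.1 he).2 v (Finset.mem_filter.1 h2).2 rfl
  · intro s hs
    rw [rI_ind hs]
    refine and_congr Iff.rfl (not_congr ?_)
    rw [Set.eq_empty_iff_forall_notMem, Finset.eq_empty_iff_forall_notMem]
    constructor
    · intro h1 e he
      obtain ⟨h2, h3⟩ := mem_rI.1 he
      obtain ⟨w, _, rfl⟩ := edge_at (hl e (hs h2)) (Finset.mem_filter.1 h3).2
      exact h1 w h2
    · intro h1 w hw
      exact h1 _ (mem_rI.2 ⟨hw, Finset.mem_filter.2 ⟨hs hw, Sym2.mem_mk_left v w⟩⟩)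

/-- the relation recording classes -/
def nrel (t : Finset (Sym2 V)) : Set (V × V) := {p | ¬ sim t p.1 p.2}

theorem cls_nrel (t : Finset (Sym2 V)) (x : V) : cls t x = {y | (x, y) ∉ nrel t} := by
  ext y
  simp [cls, nrel]

/-- the dependent product part -/
theorem SV.dpart {E E1 E2 : Finset (Sym2 V)} {D : Set V} {A : Finset V} (m : ℕ)
    (hAD : ∀ a ∈ A, a ∉ D) (hE : ∀ x, x ∈ E ↔ x ∈ E1 ∨ x ∈ E2)
    (h1 : ∀ e ∈ E1, ∀ v ∈ e, v ∈ D) (h2 : ∀ e ∈ E2, ∃ a ∈ A, ∃ d ∈ D, e = s(a, d))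
    (hR : SV F E1 (Rf m Set.univ) (3 * m)) :
    SV F E (fun s => (nu (ind s D) = m ∧ ∀ v, v ∈ Dm (ind s D)) ∧
      PS (pick (↑A : Set V)) (pcl (ind s D) D) A (cut s ↑A D)) (3 * m + 2 * A.card) := by
  have hpcl : ∀ s t : Finset (Sym2 V), nrel s = nrel t → pcl s D = pcl t D := by
    intro s t h
    funext e
    unfold pcl
    rw [cls_nrel, cls_nrel, h]
  have hnrel : ∀ s t : Finset (Sym2 V), s ⊆ t → nu s = m → nu t = m → (∀ v, v ∈ Dm s) →
      nrel s = nrel t := by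
    intro s t hst hs ht hD
    ext p
    simp only [nrel, Set.mem_ofPred_eq]
    rw [sim_const hst (hs.trans ht.symm) hD]
  have hdisj : ∀ x, x ∈ E1 → x ∉ E2 := by
    intro e he he2
    obtain ⟨a, ha, d, hd, rfl⟩ := h2 e he2
    exact hAD a ha (h1 _ he a (Sym2.mem_mk_left a d))
  have hi1 : ∀ s, s ⊆ E → ind s D = rI s E1 := by
    intro s hs
    ext e
    rw [mem_ind, mem_rI]
    constructor
    · rintro ⟨p, b⟩
      refine ⟨p, ?_⟩
      rcases (hE e).1 (hs p) with h | h
      · exact h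
      · obtain ⟨a, ha, d, hd, rfl⟩ := h2 e h
        exact absurd (b a (Sym2.mem_mk_left a d)) (hAD a ha)
    · rintro ⟨a, b⟩; exact ⟨a, h1 e b⟩
  have hi2 : ∀ s, s ⊆ E → cut s ↑A D = rI s E2 := by
    intro s hs
    ext e
    rw [mem_cut, mem_rI]
    constructor
    · rintro ⟨p, b⟩
      refine ⟨p, ?_⟩
      rcases (hE e).1 (hs p) with h | h
      · obtain ⟨a, ha, d, hd, rfl⟩ := b
        exact absurd (h1 _ h a (Sym2.mem_mk_left a d)) (hAD a ha)
      · exact h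
    · rintro ⟨a, b⟩; exact ⟨a, h2 e b⟩
  have hcutmono : ∀ s t : Finset (Sym2 V), s ⊆ t → cut s ↑A D ⊆ cut t ↑A D :=
    fun s t h e he => mem_cut.2 ⟨h (mem_cut.1 he).1, (mem_cut.1 he).2⟩
  refine SV.strat (fun s => nrel (ind s D)) ?_ ?_ ?_
  · rintro s t r hst htr hr ⟨⟨a1, a2⟩, a3⟩ ⟨⟨b1, b2⟩, b3⟩
    have c1 := nu_mid (ind_mono hst D) (ind_mono htr D) a1 b1
    refine ⟨⟨c1, fun v => Dm_mono (ind_mono hst D) (a1.trans c1.symm) (a2 v)⟩, ?_⟩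
    rw [← hpcl _ _ (hnrel _ _ (ind_mono hst D) a1 c1 a2)]
    exact a3.mono (hcutmono _ _ hst)
  · rintro s t hst ht ⟨⟨a1, a2⟩, a3⟩ ⟨⟨b1, b2⟩, b3⟩
    exact (hnrel _ _ (ind_mono hst D) a1 b1 a2).le
  intro ρ
  let pe : Sym2 V → Set V := fun e => {y | (pick D e, y) ∉ ρ}
  have hloc : ∀ s t, s ⊆ t → t ⊆ E1 → Rf m Set.univ s → Rf m Set.univ t →
      (nrel s = ρ ↔ nrel t = ρ) := by
    rintro s t hst ht ⟨a1, a2⟩ ⟨b1, b2⟩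
    rw [hnrel s t hst a1 b1 (fun v => a2 trivial)]
  have hR' := SV.summand (fun s => nrel s = ρ) hloc hR
  refine SV.prod hE hdisj (P1 := fun s => Rf m Set.univ s ∧ nrel s = ρ)
    (P2 := PS (pick (↑A : Set V)) pe A) ?_ ?_ hR' (SV.ps A E2 ?_) le_rfl
  · rintro s t r hst htr hr ⟨a1, a2⟩ ⟨b1, b2⟩
    have c1 := Rf.convOn E1 m Set.univ s t r hst htr hr a1 b1
    exact ⟨c1, (hloc s t hst (htr.trans hr) a1 c1).1 a2⟩
  · intro s hs
    rw [← hi1 s hs, ← hi2 s hs]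
    have hpe : nrel (ind s D) = ρ → pcl (ind s D) D = pe := by
      intro h
      funext e
      unfold pcl
      rw [cls_nrel, h]
    unfold Rf
    rw [Set.univ_subset_iff, Set.eq_univ_iff_forall]
    constructor
    · rintro ⟨⟨a, b⟩, c⟩
      rw [hpe c] at b
      exact ⟨⟨a, c⟩, b⟩
    · rintro ⟨⟨a, c⟩, b⟩
      rw [hpe c]
      exact ⟨⟨a, b⟩, c⟩
  · intro e he
    obtain ⟨a, ha, d, hd, rfl⟩ := h2 e he
    rw [pick_left ha (fun h => hAD d h hd)]
    exact ha

end mainclaims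


section tclaim
variable {V : Type} [LinearOrder (Sym2 V)] {F}

theorem cv_finite (M : Finset (Sym2 V)) : (cv M).Finite := by
  refine (M.biUnion fun e => {e.out.1, e.out.2}).finite_toSet.subset ?_
  rintro v ⟨e, he, hve⟩
  refine Finset.mem_biUnion.2 ⟨e, he, ?_⟩
  have h2 : e = s(e.out.1, e.out.2) := by
    conv_lhs => rw [← Quot.out_eq e]
  rw [h2, Sym2.mem_iff] at hve
  simpa using hve

theorem notMem_Dm {s : Finset (Sym2 V)} {v : V} (h : v ∉ Dm s) : v ∈ cv s := by
  obtain ⟨M, hM⟩ := exists_MM s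
  by_contra hc
  exact h ⟨M, hM, fun h' => hc (cv_mono hM.1 h')⟩

theorem SV.tclaim {E : Finset (Sym2 V)} (hl : ∀ e ∈ E, ¬ e.IsDiag) (m : ℕ)
    (hR : ∀ m', m' < m → ∀ E : Finset (Sym2 V), (∀ e ∈ E, ¬ e.IsDiag) → ∀ N, SV F E (Rf m' N) (3 * m'))
    (D : Set V) (hD : ∃ v, v ∉ D) : SV F E (Tf m D) (3 * m - 1) := by
  by_cases hfin : (Dᶜ : Set V).Finite
  swap
  · refine SV.empty ?_ _
    rintro s hs ⟨-, h2⟩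
    refine hfin ((cv_finite s).subset ?_)
    intro v hv
    exact notMem_Dm (by rw [h2]; exact hv)
  refine SV.strat As (Tf.convOn E m D) ?_ ?_
  · rintro s t hst _ ⟨_, h1⟩ ⟨_, h2⟩
    exact As_mono hst (h1.trans h2.symm)
  intro A0
  by_cases hA0 : A0 ⊆ Dᶜ
  swap
  · refine SV.empty ?_ _
    rintro s hs ⟨⟨-, h2⟩, h3⟩
    refine hA0 ?_
    rw [← h3, ← h2]
    exact fun v hv => hv.1
  obtain ⟨A, rfl⟩ : ∃ A : Finset V, ↑A = A0 := ⟨(hfin.subset hA0).toFinset, by simp⟩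
  obtain ⟨C, hCm⟩ : ∃ C : Finset V, ∀ v, v ∈ C ↔ v ∉ D ∧ v ∉ A :=
    ⟨(hfin.subset (s := Dᶜ) (t := {v | v ∉ D ∧ v ∉ A}) (fun v hv => hv.1)).toFinset, by simp⟩
  have hAD : ∀ a ∈ A, a ∉ D := fun a ha => hA0 ha
  have hCD : ∀ c ∈ C, c ∉ D := fun c hc => ((hCm c).1 hc).1
  have hAC : ∀ a ∈ A, a ∉ C := fun a ha hc => ((hCm a).1 hc).2 ha
  have hcov : ∀ v, v ∈ D ∨ v ∈ A ∨ v ∈ C := by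
    intro v; rw [hCm]; tauto
  have hQ : ∀ s, s ⊆ E → ((Tf m D s ∧ As s = ↑A) ↔
      ((∀ d ∈ D, ∀ c ∈ C, s(c, d) ∉ s) ∧ 2 * nu (ind s ↑C) = C.card ∧ (∀ v, v ∈ Dm (ind s D)) ∧
        PS (pick (↑A : Set V)) (pcl (ind s D) D) A (cut s ↑A D) ∧
        nu (ind s D) + nu (ind s ↑C) + A.card = m)) := by
    intro s _
    constructor
    · rintro ⟨⟨h1, h2⟩, h3⟩
      obtain ⟨a1, a2, a3, a4⟩ := ge_forw hAD hCD hAC hcov h2 h3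
      refine ⟨a1, a2, a3, a4, ?_⟩
      rw [← (ge_back hAD hCD hAC hcov a1 a2 a3 a4).1]
      exact h1
    · rintro ⟨a1, a2, a3, a4, a5⟩
      obtain ⟨b1, b2, b3⟩ := ge_back hAD hCD hAC hcov a1 a2 a3 a4
      exact ⟨⟨b1.trans a5, b2⟩, b3⟩
  refine SV.congr ?_ hQ
  by_cases hAE : ∃ a ∈ A, ∃ z, z ∉ D ∧ s(a, z) ∈ E
  · obtain ⟨a, ha, z, hz, he⟩ := hAE
    refine SV.cone s(a, z) he ?_ _
    intro s hs _
    have hi : ∀ X : Set V, a ∉ X → ind (Finset.cons s(a, z) s hs) X = ind s X := by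
      intro X hX
      ext e
      simp only [mem_ind, Finset.mem_cons]
      constructor
      · rintro ⟨rfl | h2, h3⟩
        · exact absurd (h3 a (Sym2.mem_mk_left a z)) hX
        · exact ⟨h2, h3⟩
      · rintro ⟨h2, h3⟩; exact ⟨Or.inr h2, h3⟩
    have hd : ∀ x d, d ∈ D → s(x, d) ≠ s(a, z) := by
      intro x d hd h
      have h1 : d ∈ s(a, z) := h ▸ Sym2.mem_mk_right x d
      rcases Sym2.mem_iff.1 h1 with rfl | rfl
      · exact hAD d ha hd
      · exact hz hd
    have hcut : cut (Finset.cons s(a, z) s hs) ↑A D = cut s ↑A D := by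
      ext e
      simp only [mem_cut, Finset.mem_cons]
      constructor
      · rintro ⟨h2 | h2, x, hx, d, hdD, h3⟩
        · exact absurd (h3.symm.trans h2) (hd x d hdD)
        · exact ⟨h2, x, hx, d, hdD, h3⟩
      · rintro ⟨h2, h3⟩; exact ⟨Or.inr h2, h3⟩
    rw [hi D (hAD a ha), hi (↑C) (hAC a ha), hcut]
    refine and_congr_left fun _ => ?_
    refine forall_congr' fun d => forall_congr' fun hdD => forall_congr' fun c => forall_congr' fun _ => ?_
    rw [Finset.mem_cons, not_or]
    exact ⟨fun h => ⟨hd c d hdD, h⟩, fun h => h.2⟩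
  have hAE' : ∀ a ∈ A, ∀ z, s(a, z) ∈ E → z ∈ D := by
    intro a ha z he
    by_contra hz
    exact hAE ⟨a, ha, z, hz, he⟩
  by_cases hpar : ∃ c, C.card = 2 * c ∧ c + A.card ≤ m
  swap
  · refine SV.empty ?_ _
    rintro s _ ⟨_, h2, _, _, h3⟩
    exact hpar ⟨nu (ind s ↑C), h2.symm, by omega⟩
  obtain ⟨c, hc, hcm⟩ := hpar
  obtain ⟨m', hm'⟩ : ∃ m', m' + c + A.card = m := ⟨m - c - A.card, by omega⟩
  have hpos : 1 ≤ c + A.card := by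
    obtain ⟨v, hv⟩ := hD
    rcases hcov v with h | h | h
    · exact absurd h hv
    · have := Finset.card_pos.2 ⟨v, h⟩; omega
    · have := Finset.card_pos.2 ⟨v, h⟩; omega
  -- ground sets
  obtain ⟨E3, hE3⟩ : ∃ E3 : Finset (Sym2 V), ∀ e, e ∈ E3 ↔ e ∈ E ∧ ∃ c ∈ C, ∃ d ∈ D, e = s(c, d) :=
    ⟨E.filter fun e => ∃ c ∈ C, ∃ d ∈ D, e = s(c, d), fun e => by rw [Finset.mem_filter]⟩
  obtain ⟨E12, hE12⟩ : ∃ E12 : Finset (Sym2 V), ∀ e, e ∈ E12 ↔ e ∈ E ∧ ¬ ∃ c ∈ C, ∃ d ∈ D, e = s(c, d) :=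
    ⟨E.filter fun e => ¬ ∃ c ∈ C, ∃ d ∈ D, e = s(c, d), fun e => by rw [Finset.mem_filter]⟩
  obtain ⟨E2, hE2⟩ : ∃ E2 : Finset (Sym2 V), ∀ e, e ∈ E2 ↔ e ∈ ind E D ∨ e ∈ cut E ↑A D :=
    ⟨ind E D ∪ cut E ↑A D, fun e => Finset.mem_union⟩
  have nD : ∀ e, (∀ v ∈ e, v ∈ D) → ¬ ∃ c ∈ C, ∃ d ∈ D, e = s(c, d) := by
    rintro e h ⟨c, hc, d, hd, rfl⟩
    exact hCD c hc (h c (Sym2.mem_mk_left c d))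
  have nC : ∀ e, (∀ v ∈ e, v ∈ (↑C : Set V)) → ¬ ∃ c ∈ C, ∃ d ∈ D, e = s(c, d) := by
    rintro e h ⟨c, hc, d, hd, rfl⟩
    exact hCD d (h d (Sym2.mem_mk_right c d)) hd
  have nA : ∀ e, (∃ a ∈ (↑A : Set V), ∃ d ∈ D, e = s(a, d)) → ¬ ∃ c ∈ C, ∃ d ∈ D, e = s(c, d) := by
    rintro e ⟨a, ha, d, hd, rfl⟩ ⟨c, hc, d', hd', h⟩
    have h1 : a ∈ s(c, d') := h ▸ Sym2.mem_mk_left a d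
    rcases Sym2.mem_iff.1 h1 with rfl | rfl
    · exact hAC a ha hc
    · exact hAD a ha hd'
  have nC2 : ∀ e, (∀ v ∈ e, v ∈ (↑C : Set V)) → e ∉ E2 := by
    intro e h h2
    rcases (hE2 e).1 h2 with h2 | h2
    · induction e using Sym2.ind with
      | _ x y =>
      have hx := Sym2.mem_mk_left x y
      exact hCD x (h x hx) ((mem_ind.1 h2).2 x hx)
    · obtain ⟨_, a, ha, d, hd, rfl⟩ := mem_cut.1 h2
      exact hAC a ha (h a (Sym2.mem_mk_left a d))
  have hgen : ∀ (s G : Finset (Sym2 V)) (X : Set V), (∀ e ∈ s, (∀ v ∈ e, v ∈ X) → e ∈ G) →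
      ind (rI s G) X = ind s X := by
    intro s G X h
    ext e
    rw [mem_ind, mem_ind, mem_rI]
    exact ⟨fun h1 => ⟨h1.1.1, h1.2⟩, fun h1 => ⟨⟨h1.1, h e h1.1 h1.2⟩, h1.2⟩⟩
  have hgenc : ∀ (s G : Finset (Sym2 V)), (∀ e ∈ s, (∃ a ∈ (↑A : Set V), ∃ d ∈ D, e = s(a, d)) → e ∈ G) →
      cut (rI s G) ↑A D = cut s ↑A D := by
    intro s G h
    ext e
    rw [mem_cut, mem_cut, mem_rI]
    exact ⟨fun h1 => ⟨h1.1.1, h1.2⟩, fun h1 => ⟨⟨h1.1, h e h1.1 h1.2⟩, h1.2⟩⟩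
  -- the perfect part
  have hperf : SV F (ind E ↑C) (fun s => nu s = c) (3 * c - 2) := by
    have hl' : ∀ e ∈ ind E ↑C, ¬ e.IsDiag := fun e he => hl e (ind_sub _ _ he)
    rcases c with _ | c
    · refine SV.base ?_
      intro s hs
      exact ⟨fun h => nu_zero (fun e he => hl' e (hs he)) h, fun h => by rw [h]; exact nu_empty⟩
    · exact SV.perfect hl' C (fun e he => (mem_ind.1 he).2) c hc (hR c (by omega))
  have hdep : SV F E2 (fun s => (nu (ind s D) = m' ∧ ∀ v, v ∈ Dm (ind s D)) ∧
      PS (pick (↑A : Set V)) (pcl (ind s D) D) A (cut s ↑A D)) (3 * m' + 2 * A.card) :=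
    SV.dpart m' hAD hE2 (fun e he => (mem_ind.1 he).2) (fun e he => (mem_cut.1 he).2)
      (hR m' (by omega) _ (fun e he => hl e (ind_sub _ _ he)) _)
  have h12 : SV F E12 (fun s => nu (ind s ↑C) = c ∧ (nu (ind s D) = m' ∧ ∀ v, v ∈ Dm (ind s D)) ∧
      PS (pick (↑A : Set V)) (pcl (ind s D) D) A (cut s ↑A D)) (3 * m - 1) := by
    refine SV.prod (E1 := ind E ↑C) (E2 := E2) ?_ ?_ ?_ ?_ hperf hdep (by omega)
    · intro e
      rw [hE12, hE2]
      constructor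
      · rintro ⟨h1, h2⟩
        induction e using Sym2.ind with
        | _ x y =>
        have e2 : s(y, x) ∈ E := by rw [Sym2.eq_swap]; exact h1
        have g1 := hcov x
        have g2 := hcov y
        rcases g1 with g1 | g1 | g1 <;> rcases g2 with g2 | g2 | g2
        · refine Or.inr (Or.inl (mem_ind.2 ⟨h1, ?_⟩))
          intro v hv
          rcases Sym2.mem_iff.1 hv with rfl | rfl <;> assumption
        · exact Or.inr (Or.inr (mem_cut.2 ⟨h1, y, g2, x, g1, Sym2.eq_swap⟩))
        · exact absurd ⟨y, g2, x, g1, Sym2.eq_swap⟩ h2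
        · exact Or.inr (Or.inr (mem_cut.2 ⟨h1, x, g1, y, g2, rfl⟩))
        · exact absurd (hAE' x g1 y h1) (hAD y g2)
        · exact absurd (hAE' x g1 y h1) (hCD y g2)
        · exact absurd ⟨x, g1, y, g2, rfl⟩ h2
        · exact absurd (hAE' y g2 x e2) (hCD x g1)
        · refine Or.inl (mem_ind.2 ⟨h1, ?_⟩)
          intro v hv
          rcases Sym2.mem_iff.1 hv with rfl | rfl <;> assumption
      · rintro (h | h | h)
        · exact ⟨(mem_ind.1 h).1, nC e (mem_ind.1 h).2⟩
        · exact ⟨(mem_ind.1 h).1, nD e (mem_ind.1 h).2⟩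
        · exact ⟨(mem_cut.1 h).1, nA e (mem_cut.1 h).2⟩
    · intro e he
      exact nC2 e (mem_ind.1 he).2
    · intro s t r h1 h2 _ h3 h4
      exact nu_mid h1 h2 h3 h4
    · intro s hs
      have hsE : s ⊆ E := fun e he => ((hE12 e).1 (hs he)).1
      rw [rI_ind hsE]
      rw [hgen s E2 D (fun e he h => (hE2 e).2 (Or.inl (mem_ind.2 ⟨hsE he, h⟩))),
        hgenc s E2 (fun e he h => (hE2 e).2 (Or.inr (mem_cut.2 ⟨hsE he, h⟩)))]
  refine SV.prod (E1 := E3) (E2 := E12) (P1 := fun s => s = ∅) ?_ ?_ ?_ ?_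
    (SV.base fun _ _ => Iff.rfl) h12 (Nat.zero_add _).le
  · intro e; rw [hE3, hE12]; exact ⟨fun h => (Classical.em _).elim (fun q => Or.inl ⟨h, q⟩) (fun q => Or.inr ⟨h, q⟩), fun h => h.elim (fun q => q.1) (fun q => q.1)⟩
  · intro e h1 h2
    exact ((hE12 e).1 h2).2 ((hE3 e).1 h1).2
  · rintro s t r h1 h2 _ _ rfl
    exact Finset.subset_empty.1 h2
  · intro s hs
    rw [hgen s E12 D (fun e he h => (hE12 e).2 ⟨hs he, nD e h⟩),
      hgen s E12 ↑C (fun e he h => (hE12 e).2 ⟨hs he, nC e h⟩),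
      hgenc s E12 (fun e he h => (hE12 e).2 ⟨hs he, nA e h⟩)]
    have h3 : rI s E3 = ∅ ↔ ∀ d ∈ D, ∀ c ∈ C, s(c, d) ∉ s := by
      rw [Finset.eq_empty_iff_forall_notMem]
      constructor
      · intro h d hd c hc he
        exact h _ (mem_rI.2 ⟨he, (hE3 _).2 ⟨hs he, c, hc, d, hd, rfl⟩⟩)
      · intro h e he
        obtain ⟨h1, h2⟩ := mem_rI.1 he
        obtain ⟨_, c, hc, d, hd, rfl⟩ := (hE3 e).1 h2
        exact h d hd c hc h1
    rw [h3]
    constructor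
    · rintro ⟨a1, a2, a3, a4, a5⟩
      exact ⟨a1, by omega, ⟨by omega, a3⟩, a4⟩
    · rintro ⟨a1, a2, ⟨a3, a4⟩, a5⟩
      exact ⟨a1, by omega, a4, a5, by omega⟩

end tclaim

section final
variable {V : Type} [LinearOrder (Sym2 V)] {F}

theorem SV.notall {E : Finset (Sym2 V)} (hl : ∀ e ∈ E, ¬ e.IsDiag) (m : ℕ)
    (hR : ∀ m', m' < m → ∀ E : Finset (Sym2 V), (∀ e ∈ E, ¬ e.IsDiag) → ∀ N, SV F E (Rf m' N) (3 * m'))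
    (N : Set V) : SV F E (fun s => nu s = m ∧ ¬ N ⊆ Dm s) (3 * m - 1) := by
  refine SV.strat Dm ?_ ?_ ?_
  · rintro s t r hst htr _ ⟨h1, h2⟩ ⟨h3, h4⟩
    have h5 := nu_mid hst htr h1 h3
    exact ⟨h5, fun h => h4 (h.trans (Dm_mono htr (h5.trans h3.symm)))⟩
  · rintro s t hst _ ⟨h1, h2⟩ ⟨h3, h4⟩
    exact Dm_mono hst (h1.trans h3.symm)
  intro D
  by_cases hN : N ⊆ D
  · refine SV.empty ?_ _
    rintro s _ ⟨⟨_, h1⟩, h2⟩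
    exact h1 (h2 ▸ hN)
  · refine (SV.tclaim hl m hR D ?_).congr ?_
    · obtain ⟨v, _, hv⟩ := Set.not_subset.1 hN
      exact ⟨v, hv⟩
    · intro s _
      constructor
      · rintro ⟨⟨a, _⟩, b⟩; exact ⟨a, b⟩
      · rintro ⟨a, b⟩; exact ⟨⟨a, b ▸ hN⟩, b⟩

theorem SV.rclaim (m : ℕ) : ∀ E : Finset (Sym2 V), (∀ e ∈ E, ¬ e.IsDiag) → ∀ N,
    SV F E (Rf m N) (3 * m) := by
  induction m using Nat.strong_induction_on with
  | _ m hR =>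
  rcases Nat.eq_zero_or_pos m with rfl | hm
  · intro E hl N
    refine SV.base ?_
    intro s hs
    constructor
    · rintro ⟨h, _⟩; exact nu_zero (fun e he => hl e (hs he)) h
    · rintro rfl
      exact ⟨nu_empty, fun v _ => Dm_of_zero nu_empty v⟩
  have key : ∀ n, ∀ E : Finset (Sym2 V), E.card = n → (∀ e ∈ E, ¬ e.IsDiag) → ∀ N,
      SV F E (Rf m N) (3 * m) := by
    intro n
    induction n using Nat.strong_induction_on with
    | _ n ih =>
    intro E hE hl
    have h0 : SV F E (fun s => nu s = m) (3 * m) := by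
      rcases E.eq_empty_or_nonempty with rfl | ⟨e, he⟩
      · refine SV.empty ?_ _
        intro s hs h
        rw [Finset.subset_empty.1 hs, nu_empty] at h
        omega
      induction e using Sym2.ind with
      | _ v w =>
      refine SV.glue ?_ (fun s => v ∈ Dm s) ?_ ?_ ?_
      · intro s t r h1 h2 _ h3 h4
        exact nu_mid h1 h2 h3 h4
      · intro s t hst _ h1 h2 hv
        exact Dm_mono hst (h1.trans h2.symm) hv
      · refine SV.star_upper hl v m _ (ih _ ?_ (ind E {v}ᶜ) rfl (fun e he => hl e (ind_sub _ _ he)) _)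
        rw [← hE]
        refine Finset.card_lt_card ⟨ind_sub _ _, fun h => ?_⟩
        exact (mem_ind.1 (h he)).2 v (Sym2.mem_mk_left v w) rfl
      · refine ((SV.notall hl m hR {v}).mono (Nat.sub_le _ _)).congr ?_
        intro s _
        rw [Set.singleton_subset_iff]
    intro N
    obtain ⟨b, hb⟩ : ∃ b, 3 * m = b + 1 := ⟨3 * m - 1, by omega⟩
    have h1 := SV.notall hl m hR N
    rw [show 3 * m - 1 = b by omega] at h1
    rw [hb] at h0 ⊢
    refine SV.upper ?_ (fun s => N ⊆ Dm s) ?_ h0 h1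
    · intro s t r h1 h2 _ h3 h4
      exact nu_mid h1 h2 h3 h4
    · intro s t hst _ h1 h2 hv
      exact hv.trans (Dm_mono hst (h1.trans h2.symm))
  exact fun E => key _ E rfl

theorem SV.nm {E : Finset (Sym2 V)} (hl : ∀ e ∈ E, ¬ e.IsDiag) (k : ℕ) :
    SV F E (fun s => nu s < k) (3 * (k - 1)) := by
  refine SV.strat nu ?_ ?_ ?_
  · intro s t r _ h2 _ _ h4
    exact (nu_mono h2).trans_lt h4
  · intro s t hst _ _ _
    exact nu_mono hst
  intro j
  by_cases hj : j < k
  · refine ((SV.rclaim j E hl ∅).mono (by omega)).congr ?_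
    intro s _
    constructor
    · rintro ⟨_, h⟩; exact ⟨h, Set.empty_subset _⟩
    · rintro ⟨h, _⟩; exact ⟨by omega, h⟩
  · refine SV.empty ?_ _
    rintro s _ ⟨h1, h2⟩
    omega

end final

/-- For `k ≥ 2` and any finite simple graph with edge set `E`, the non-matching complex
`NM_k(E)` has vanishing reduced homology (over any field) in all dimensions `d ≥ 3k - 3`. -/
theorem NM_vanishing {V : Type} [LinearOrder (Sym2 V)] (F : Type) [Field F]
    (k : ℕ) (hk : 2 ≤ k) (E : Finset (Sym2 V)) (hs : ∀ e ∈ E, ¬ e.IsDiag) :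
    ∀ d, 3 * k - 3 ≤ d → VanishesAt F (NM k E) d := by
  intro d hd x hx hbx
  have hm : ∀ s : Finset (Sym2 V), s ∈ NM k E ↔ s ⊆ E ∧ nu s < k := by
    intro s
    unfold NM
    rw [Finset.mem_filter, Finset.mem_powerset]
  have hV := (SV.nm (F := F) (E := E) hs k).van (d + 1) (by omega)
  rw [bdry_eq] at hbx
  have hxc : ∀ s, x s ≠ 0 → (s ⊆ E ∧ nu s < k) ∧ s.card = d + 1 := by
    intro s h
    have := hx s (Finsupp.mem_support_iff.2 h)
    exact ⟨(hm s).1 this.1, this.2⟩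
  obtain ⟨y, hy, hyb⟩ := hV x hxc (fun s _ => by rw [hbx]; rfl)
  refine ⟨y, fun s h => ?_, ?_⟩
  · have := hy s (Finsupp.mem_support_iff.1 h)
    exact ⟨(hm s).2 this.1, this.2⟩
  · rw [bdry_eq]
    ext s
    by_cases hP : s ⊆ E ∧ nu s < k
    · exact hyb s hP
    · have h1 : x s = 0 := by
        by_contra h
        exact hP (hxc s h).1
      rw [h1]
      by_contra h
      obtain ⟨r, hr, v, hv, hsr⟩ := bd_supp _ _ h
      have h2 := (hy r (Finsupp.mem_support_iff.1 hr)).1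
      have h3 : s ⊆ r := by rw [hsr]; intro a ha; exact Finset.mem_of_mem_erase (by convert ha)
      exact hP ⟨h3.trans h2.1, (nu_mono h3).trans_lt h2.2⟩
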